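/- arXiv:2409.10948 — 6 statements merged into one kernel-verified Lean document; each statement's English description precedes it below -/
import Mathlib

section
/- Let τ ≥ 0, let m and l be nonnegative integers with l < m+1 (i.e. l ≤ m), and let f : ℂ → ℂ be an entire function of exponential type τ such that f(z) = ∑_{j=0}^∞ a_j z^{2m+1+2j} for all z ∈ ℂ, where a_0 ≠ 0, and such that the restriction of f to [0,∞) is real-valued and absolutely integrable, i.e. ∫_0^∞ |f(x)| dx < ∞. Then for every real λ > τ, the Hankel transform vanishes: ∫_0^∞ f(x) J_{2l}(λx) dx = 0. -/
open MeasureTheory Real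

/-- Bessel function of the first kind of nonnegative integer order `n`. -/
noncomputable def besselJ (n : ℕ) (x : ℝ) : ℝ :=
  ∑' k : ℕ, (-1 : ℝ) ^ k / (Nat.factorial k * Nat.factorial (n + k)) * (x / 2) ^ (n + 2 * k)

/-- `f` is an entire function of exponential type `τ`. -/
def ExpType (τ : ℝ) (f : ℂ → ℂ) : Prop :=
  Differentiable ℂ f ∧
    ∀ ε > 0, ∃ C > 0, ∀ z : ℂ, ‖f z‖ ≤ C * Real.exp ((τ + ε) * ‖z‖)

open Filter Topology

lemma hk_coeff_bound {m : ℕ} {f : ℂ → ℂ} {a : ℕ → ℂ} (hf : Differentiable ℂ f)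
    (hexp : ∀ z : ℂ, HasSum (fun j : ℕ => a j * z ^ (2 * m + 1 + 2 * j)) (f z))
    {r M : ℝ} (hr : 0 < r) (hM : ∀ z : ℂ, ‖z‖ = r → ‖f z‖ ≤ M) (j : ℕ) :
    ‖a j‖ * r ^ (2 * m + 1 + 2 * j) ≤ M := by
  set e : ℕ → ℕ := fun j => 2 * m + 1 + 2 * j with he
  have hinj : Function.Injective e := by intro x y h; simp only [he] at h; omega
  set p : ℕ → ℂ := Function.extend e a 0 with hp
  have hp1 : HasFPowerSeriesAt f (FormalMultilinearSeries.ofScalars ℂ p) 0 := by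
    rw [hasFPowerSeriesAt_iff]
    refine Eventually.of_forall fun z => ?_
    simp only [FormalMultilinearSeries.coeff_ofScalars, zero_add, smul_eq_mul]
    rw [← hinj.hasSum_iff]
    · have hfun : (fun n => z ^ n * p n) ∘ e = fun j => a j * z ^ (2 * m + 1 + 2 * j) := by
        funext k
        have h0 : p (e k) = a k := by rw [hp, hinj.extend_apply]
        simp only [Function.comp_apply, h0]
        rw [mul_comm]
      rw [hfun]; exact hexp z
    · intro n hn
      have h0 : p n = 0 := by
        rw [hp, Function.extend_apply' _ _ _ (by simpa using hn)]
        rfl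
      simp [h0]
  have hp2 : HasFPowerSeriesAt f (FormalMultilinearSeries.ofScalars ℂ
      (fun n => ((n.factorial : ℂ)⁻¹ * iteratedDeriv n f 0))) 0 := by
    rw [hasFPowerSeriesAt_iff]
    refine Eventually.of_forall fun z => ?_
    have := Complex.hasSum_taylorSeries_of_entire hf 0 z
    simp only [FormalMultilinearSeries.coeff_ofScalars, zero_add, smul_eq_mul]
    convert this using 2 with n
    simp; ring
  have h := hp1.eq_formalMultilinearSeries hp2
  have hc : a j = ((e j).factorial : ℂ)⁻¹ * iteratedDeriv (e j) f 0 := by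
    have := congrArg (fun q => FormalMultilinearSeries.coeff q (e j)) h
    simp only [FormalMultilinearSeries.coeff_ofScalars] at this
    rw [← this]; simp [hp, hinj.extend_apply]
  have hb := Complex.norm_iteratedDeriv_le_of_forall_mem_sphere_norm_le (c := 0) (C := M)
    (e j) hr hf.diffContOnCl (fun z hz => hM z (by simpa using hz))
  have hfac : (0 : ℝ) < (e j).factorial := by positivity
  rw [hc, norm_mul, norm_inv, Complex.norm_natCast]
  change _ * r ^ (e j) ≤ M
  rw [le_div_iff₀ (by positivity)] at hb
  rw [mul_assoc, inv_mul_le_iff₀ hfac]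
  exact hb

lemma hk_growth {τ : ℝ} (hτ : 0 ≤ τ) {m : ℕ} {f : ℂ → ℂ} {a : ℕ → ℂ} (hf : ExpType τ f)
    (hexp : ∀ z : ℂ, HasSum (fun j : ℕ => a j * z ^ (2 * m + 1 + 2 * j)) (f z))
    {σ : ℝ} (hσ : τ < σ) : ∃ C q : ℝ, 0 < C ∧ 0 < q ∧ q < 1 ∧ ∀ j : ℕ, ∀ x : ℝ, 0 < x →
      ‖a j‖ * x ^ (2 * m + 1 + 2 * j) ≤ C * q ^ (2 * m + 1 + 2 * j) * Real.exp (σ * x) := by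
  obtain ⟨hd, hg⟩ := hf
  obtain ⟨C, hC, hb⟩ := hg ((σ - τ) / 2) (by linarith)
  set ρ := τ + (σ - τ) / 2 with hρ
  have hρ0 : 0 < ρ := by rw [hρ]; linarith
  have hρ1 : ρ < σ := by rw [hρ]; linarith
  have hσ0 : 0 < σ := by linarith
  refine ⟨C, ρ / σ, hC, by positivity, (div_lt_one hσ0).2 hρ1, fun j x hx => ?_⟩
  have := hk_coeff_bound hd hexp (r := σ / ρ * x) (M := C * Real.exp (σ * x)) (by positivity)
    (fun z hz => by
      refine (hb z).trans_eq ?_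
      rw [hz]; congr 2; field_simp) j
  rw [mul_pow, ← mul_assoc] at this
  set n := 2 * m + 1 + 2 * j
  have hq : (ρ / σ) ^ n * (σ / ρ) ^ n = 1 := by
    rw [← mul_pow]; field_simp; simp
  calc ‖a j‖ * x ^ n = (ρ / σ) ^ n * (‖a j‖ * (σ / ρ) ^ n * x ^ n) := by
        linear_combination (-‖a j‖ * x ^ n) * hq
    _ ≤ (ρ / σ) ^ n * (C * Real.exp (σ * x)) := by gcongr
    _ = _ := by ring

lemma hk_int_pow (n : ℕ) {s : ℝ} (hs : 0 < s) :
    ∫ x in Set.Ioi (0:ℝ), x ^ n * Real.exp (-(s * x)) = n.factorial / s ^ (n + 1) := by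
  have := Real.integral_rpow_mul_exp_neg_mul_Ioi (a := n + 1) (r := s) (by positivity) hs
  rw [Real.Gamma_nat_eq_factorial] at this
  simp only [add_sub_cancel_right, Real.rpow_natCast] at this
  rw [this]
  rw [show ((n : ℝ) + 1) = ((n + 1 : ℕ) : ℝ) by push_cast; ring, Real.rpow_natCast]
  rw [one_div, inv_pow]; ring

lemma hk_integrable_pow (n : ℕ) {s : ℝ} (hs : 0 < s) :
    IntegrableOn (fun x : ℝ => x ^ n * Real.exp (-(s * x))) (Set.Ioi 0) := by
  by_contra h
  have h1 := hk_int_pow n hs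
  rw [integral_undef h] at h1
  have : (0:ℝ) < n.factorial / s ^ (n + 1) := by positivity
  linarith

lemma hk_summable {τ : ℝ} (hτ : 0 ≤ τ) {m : ℕ} {f : ℂ → ℂ} {a : ℕ → ℂ} (hf : ExpType τ f)
    (hexp : ∀ z : ℂ, HasSum (fun j : ℕ => a j * z ^ (2 * m + 1 + 2 * j)) (f z))
    {s : ℝ} (hs : τ < s) : Summable (fun j : ℕ =>
      ‖a j‖ * ((2 * m + 1 + 2 * j).factorial / s ^ (2 * m + 1 + 2 * j + 1))) := by
  have hs0 : 0 < s := by linarith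
  obtain ⟨C, q, hC, hq0, hq1, hb⟩ := hk_growth hτ hf hexp (σ := (τ + s) / 2) (by linarith)
  have hsum : Summable (fun j : ℕ => C * q ^ (2 * m + 1 + 2 * j) * (1 / (s - (τ + s) / 2))) := by
    apply Summable.mul_right
    apply Summable.mul_left
    have := (summable_geometric_of_lt_one hq0.le hq1).comp_injective
      (i := fun j : ℕ => 2 * m + 1 + 2 * j) (by intro x y h; simp only at h; omega)
    exact this
  refine Summable.of_nonneg_of_le (fun j => by positivity) (fun j => ?_) hsum
  rw [← hk_int_pow _ hs0, ← integral_const_mul]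
  have h2 := hk_int_pow 0 (s := s - (τ + s) / 2) (by linarith)
  simp only [pow_zero, one_mul, Nat.factorial_zero, Nat.cast_one, zero_add, pow_one] at h2
  rw [← h2, ← integral_const_mul]
  refine setIntegral_mono_on ((hk_integrable_pow _ hs0).const_mul _)
    (Integrable.const_mul ?_ _) measurableSet_Ioi (fun x hx => ?_)
  · have h3 := hk_integrable_pow 0 (s := s - (τ + s) / 2) (by linarith)
    simp only [pow_zero, one_mul] at h3
    exact h3
  · rw [← mul_assoc]
    refine (mul_le_mul_of_nonneg_right (hb j x hx) (Real.exp_pos _).le).trans_eq ?_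
    rw [mul_assoc, ← Real.exp_add]
    congr 2; ring

noncomputable def hkF (f : ℂ → ℂ) (s : ℂ) : ℂ :=
  ∫ x in Set.Ioi (0:ℝ), f x * Complex.exp (-(s * x))

noncomputable def hkB (m : ℕ) (a : ℕ → ℂ) (s : ℂ) : ℂ :=
  ∑' j : ℕ, a j * ((2 * m + 1 + 2 * j).factorial / s ^ (2 * m + 1 + 2 * j + 1))

lemma hk_F_eq_B_real {τ : ℝ} (hτ : 0 ≤ τ) {m : ℕ} {f : ℂ → ℂ} {a : ℕ → ℂ} (hf : ExpType τ f)
    (hexp : ∀ z : ℂ, HasSum (fun j : ℕ => a j * z ^ (2 * m + 1 + 2 * j)) (f z))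
    {s : ℝ} (hs : τ < s) : hkF f s = hkB m a s := by
  have hs0 : 0 < s := by linarith
  have key := hasSum_integral_of_summable_integral_norm (μ := volume.restrict (Set.Ioi (0:ℝ)))
    (F := fun (j : ℕ) (x : ℝ) =>
      a j * ((x ^ (2 * m + 1 + 2 * j) * Real.exp (-(s * x)) : ℝ) : ℂ))
    (fun j => ((hk_integrable_pow _ hs0).ofReal).const_mul _) (by
      refine (hk_summable hτ hf hexp hs).congr fun j => ?_
      rw [← hk_int_pow _ hs0, ← integral_const_mul]
      refine setIntegral_congr_fun measurableSet_Ioi fun x hx => ?_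
      have hx' : (0:ℝ) < x := hx
      simp only [norm_mul, Complex.norm_real, Real.norm_eq_abs]
      rw [abs_of_pos (pow_pos hx' _), abs_of_pos (Real.exp_pos _)])
  have h1 : ∀ j : ℕ, ∫ x in Set.Ioi (0:ℝ),
      a j * ((x ^ (2 * m + 1 + 2 * j) * Real.exp (-(s * x)) : ℝ) : ℂ)
      = a j * ((2 * m + 1 + 2 * j).factorial / (s:ℂ) ^ (2 * m + 1 + 2 * j + 1)) := by
    intro j
    rw [integral_const_mul, integral_complex_ofReal, hk_int_pow _ hs0]
    push_cast; rfl
  simp only [h1] at key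
  rw [hkB, key.tsum_eq, hkF]
  refine setIntegral_congr_fun measurableSet_Ioi fun x hx => ?_
  have := ((hexp x).mul_right (Complex.exp (-(s * x)))).tsum_eq
  rw [← this]
  refine tsum_congr fun j => ?_
  push_cast; ring

lemma hk_meas {f : ℂ → ℂ} (hf : Continuous f) (s : ℂ) :
    AEStronglyMeasurable (fun x : ℝ => f x * Complex.exp (-(s * x)))
      (volume.restrict (Set.Ioi (0:ℝ))) := by
  apply Continuous.aestronglyMeasurable; fun_prop

lemma hk_norm_exp_le {s : ℂ} (hs : 0 ≤ s.re) {x : ℝ} (hx : 0 < x) :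
    ‖Complex.exp (-(s * x))‖ ≤ 1 := by
  rw [Complex.norm_exp, Real.exp_le_one_iff]
  simp; positivity

lemma hk_F_cont {f : ℂ → ℂ} (hf : Continuous f)
    (hint : IntegrableOn (fun x : ℝ => f x) (Set.Ioi 0)) :
    ContinuousOn (hkF f) {s : ℂ | 0 ≤ s.re} := by
  refine continuousOn_of_dominated (bound := fun x : ℝ => ‖f x‖) (fun s _ => hk_meas hf s) ?_
    hint.norm (Eventually.of_forall fun x => by fun_prop)
  intro s hs
  filter_upwards [ae_restrict_mem measurableSet_Ioi] with x hx
  rw [norm_mul]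
  exact mul_le_of_le_one_right (norm_nonneg _) (hk_norm_exp_le hs hx)

lemma hk_F_diff {f : ℂ → ℂ} (hf : Continuous f)
    (hint : IntegrableOn (fun x : ℝ => f x) (Set.Ioi 0)) {s : ℂ} (hs : 0 < s.re) :
    DifferentiableAt ℂ (hkF f) s := by
  have hc : 0 < s.re / 2 := by linarith
  have hS : {z : ℂ | s.re / 2 < z.re} ∈ 𝓝 s :=
    (isOpen_lt continuous_const Complex.continuous_re).mem_nhds (by simp; linarith)
  refine (hasDerivAt_integral_of_dominated_loc_of_deriv_le
    (F := fun (z : ℂ) (x : ℝ) => f x * Complex.exp (-(z * x)))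
    (F' := fun (z : ℂ) (x : ℝ) => f x * (Complex.exp (-(z * x)) * (-x)))
    (bound := fun x : ℝ => ‖f x‖ * (1 / (s.re / 2)))
    hS (Eventually.of_forall fun z => hk_meas hf z) ?_ ?_ ?_ ?_ ?_).2.differentiableAt
  · refine Integrable.mono' hint.norm (hk_meas hf s) ?_
    filter_upwards [ae_restrict_mem measurableSet_Ioi] with x hx
    rw [norm_mul]
    exact mul_le_of_le_one_right (norm_nonneg _) (hk_norm_exp_le hs.le hx)
  · apply Continuous.aestronglyMeasurable; fun_prop
  · filter_upwards [ae_restrict_mem measurableSet_Ioi] with x hx z hz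
    have hx' : (0:ℝ) < x := hx
    have hz' : s.re / 2 < z.re := hz
    rw [norm_mul]
    gcongr
    rw [norm_mul, Complex.norm_exp, norm_neg, Complex.norm_real, Real.norm_of_nonneg hx'.le]
    simp only [Complex.neg_re, Complex.mul_re, Complex.ofReal_re, Complex.ofReal_im, mul_zero,
      sub_zero]
    rw [le_div_iff₀ hc]
    have h1 : x * (s.re / 2) ≤ Real.exp (z.re * x) := by
      have := Real.add_one_le_exp (z.re * x)
      nlinarith
    rw [mul_assoc, Real.exp_neg, inv_mul_le_iff₀ (Real.exp_pos _), mul_one]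
    exact h1
  · exact hint.norm.mul_const _
  · refine Eventually.of_forall fun x z _ => ?_
    have h1 : HasDerivAt (fun z : ℂ => -(z * x)) (-(x:ℂ)) z := by
      have h2 := ((hasDerivAt_id z).mul_const (x:ℂ)).neg
      rw [one_mul] at h2
      exact h2
    exact (h1.cexp).const_mul _

lemma hk_B_diff {τ : ℝ} (hτ : 0 ≤ τ) {m : ℕ} {f : ℂ → ℂ} {a : ℕ → ℂ} (hf : ExpType τ f)
    (hexp : ∀ z : ℂ, HasSum (fun j : ℕ => a j * z ^ (2 * m + 1 + 2 * j)) (f z))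
    {σ : ℝ} (hσ : τ < σ) : DifferentiableOn ℂ (hkB m a) {s : ℂ | σ < ‖s‖} := by
  have hσ0 : 0 < σ := by linarith
  have hne : ∀ s ∈ {s : ℂ | σ < ‖s‖}, s ≠ 0 := by
    intro s hs h; simp [h] at hs; linarith
  refine Complex.differentiableOn_tsum_of_summable_norm (hk_summable hτ hf hexp hσ) ?_
    (isOpen_lt continuous_const continuous_norm) ?_
  · intro j s hs
    have := hne s hs
    apply DifferentiableAt.differentiableWithinAt
    have h2 : s ^ (2 * m + 1 + 2 * j + 1) ≠ 0 := pow_ne_zero _ this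
    fun_prop (disch := assumption)
  · intro j s hs
    have hs' : σ < ‖s‖ := hs
    rw [norm_mul, norm_div, norm_pow, Complex.norm_natCast]
    gcongr

lemma hk_B_even (m : ℕ) (a : ℕ → ℂ) (s : ℂ) : hkB m a (-s) = hkB m a s := by
  unfold hkB
  refine tsum_congr fun j => ?_
  rw [Even.neg_pow ⟨m + 1 + j, by ring⟩]

lemma hk_B_bound {τ : ℝ} (hτ : 0 ≤ τ) {m : ℕ} {f : ℂ → ℂ} {a : ℕ → ℂ} (hf : ExpType τ f)
    (hexp : ∀ z : ℂ, HasSum (fun j : ℕ => a j * z ^ (2 * m + 1 + 2 * j)) (f z))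
    {σ : ℝ} (hσ : τ < σ) : ∃ K : ℝ, 0 ≤ K ∧ ∀ s : ℂ, σ ≤ ‖s‖ → ‖hkB m a s‖ ≤ K / ‖s‖ ^ (2 * m + 2) := by
  have hσ0 : 0 < σ := by linarith
  have hs := hk_summable hτ hf hexp hσ
  refine ⟨σ ^ (2 * m + 2) * ∑' j : ℕ,
      ‖a j‖ * ((2 * m + 1 + 2 * j).factorial / σ ^ (2 * m + 1 + 2 * j + 1)), ?_, fun s hσs => ?_⟩
  · exact mul_nonneg (by positivity) (tsum_nonneg fun j => by positivity)
  have hs0 : 0 < ‖s‖ := by linarith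
  rw [mul_div_right_comm, hkB, ]
  refine tsum_of_norm_bounded (hs.hasSum.mul_left _) fun j => ?_
  rw [norm_mul, norm_div, norm_pow, Complex.norm_natCast]
  rw [show 2 * m + 1 + 2 * j + 1 = (2 * m + 2) + 2 * j by ring, pow_add _ (2 * m + 2) (2 * j),
    pow_add _ (2 * m + 2) (2 * j)]
  have : σ ^ (2 * j) ≤ ‖s‖ ^ (2 * j) := by gcongr
  calc ‖a j‖ * ((2 * m + 1 + 2 * j).factorial / (‖s‖ ^ (2 * m + 2) * ‖s‖ ^ (2 * j)))
      ≤ ‖a j‖ * ((2 * m + 1 + 2 * j).factorial / (‖s‖ ^ (2 * m + 2) * σ ^ (2 * j))) := by gcongr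
    _ = σ ^ (2 * m + 2) / ‖s‖ ^ (2 * m + 2) *
        (‖a j‖ * ((2 * m + 1 + 2 * j).factorial / (σ ^ (2 * m + 2) * σ ^ (2 * j)))) := by field_simp

lemma hk_F_eq_B_open {τ : ℝ} (hτ : 0 ≤ τ) {m : ℕ} {f : ℂ → ℂ} {a : ℕ → ℂ} (hf : ExpType τ f)
    (hexp : ∀ z : ℂ, HasSum (fun j : ℕ => a j * z ^ (2 * m + 1 + 2 * j)) (f z))
    (hint : IntegrableOn (fun x : ℝ => f x) (Set.Ioi 0))
    {s : ℂ} (hs0 : 0 < s.re) (hs : τ < ‖s‖) : hkF f s = hkB m a s := by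
  obtain ⟨σ, hσ, hσs⟩ := exists_between hs
  have hσ0 : 0 < σ := by linarith
  set U : Set ℂ := {ζ : ℂ | Real.log σ < ζ.re} ∩ {ζ : ℂ | -(π/2) < ζ.im} ∩ {ζ : ℂ | ζ.im < π/2}
    with hU
  have hUo : IsOpen U := ((isOpen_lt continuous_const Complex.continuous_re).inter
    (isOpen_lt continuous_const Complex.continuous_im)).inter
    (isOpen_lt Complex.continuous_im continuous_const)
  have hUc : Convex ℝ U := ((convex_halfSpace_re_gt _).inter (convex_halfSpace_im_gt _)).inter
    (convex_halfSpace_im_lt _)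
  have hre : ∀ ζ ∈ U, 0 < (Complex.exp ζ).re := by
    rintro ζ ⟨⟨_, h1⟩, h2⟩
    rw [Complex.exp_re]
    exact mul_pos (Real.exp_pos _) (Real.cos_pos_of_mem_Ioo ⟨h1, h2⟩)
  have hno : ∀ ζ ∈ U, σ < ‖Complex.exp ζ‖ := by
    rintro ζ ⟨⟨h0, _⟩, _⟩
    rw [Complex.norm_exp]
    exact (Real.log_lt_iff_lt_exp hσ0).1 h0
  have hF : AnalyticOnNhd ℂ (fun ζ => hkF f (Complex.exp ζ)) U := by
    refine DifferentiableOn.analyticOnNhd (fun ζ hζ => ?_) hUo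
    exact ((hk_F_diff hf.1.continuous hint (hre ζ hζ)).comp ζ
      Complex.differentiableAt_exp).differentiableWithinAt
  have hB : AnalyticOnNhd ℂ (fun ζ => hkB m a (Complex.exp ζ)) U := by
    refine DifferentiableOn.analyticOnNhd ?_ hUo
    exact (hk_B_diff hτ hf hexp hσ).comp Complex.differentiable_exp.differentiableOn hno
  set z₀ : ℂ := ((Real.log σ + 1 : ℝ) : ℂ) with hz₀
  have hz₀U : z₀ ∈ U := by
    refine ⟨⟨?_, ?_⟩, ?_⟩ <;> simp [hz₀] <;> positivity
  have hfr : ∃ᶠ z in 𝓝[≠] z₀, hkF f (Complex.exp z) = hkB m a (Complex.exp z) := by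
    have ht : Tendsto (fun k : ℕ => z₀ + ((1 / ((k : ℝ) + 1) : ℝ) : ℂ)) atTop (𝓝[≠] z₀) := by
      rw [tendsto_nhdsWithin_iff]
      constructor
      · have := (Complex.continuous_ofReal.tendsto 0).comp
          (tendsto_one_div_add_atTop_nhds_zero_nat (𝕜 := ℝ))
        simpa using this.const_add z₀
      · refine Eventually.of_forall fun k => ?_
        have : (1 / ((k : ℝ) + 1)) ≠ 0 := by positivity
        simp only [Set.mem_compl_iff, Set.mem_singleton_iff, add_eq_left]
        exact_mod_cast this
    refine ht.frequently (Frequently.of_forall fun k => ?_)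
    rw [hz₀, ← Complex.ofReal_add, ← Complex.ofReal_exp]
    refine hk_F_eq_B_real hτ hf hexp ?_
    refine hσ.trans ((Real.log_lt_iff_lt_exp hσ0).1 ?_)
    have : 0 < (1 / ((k : ℝ) + 1)) := by positivity
    linarith
  have hsne : s ≠ 0 := by rintro rfl; simp at hs0
  have hmem : Complex.log s ∈ U := by
    have h := Complex.abs_arg_lt_pi_div_two_iff.2 (Or.inl hs0)
    rw [abs_lt] at h
    refine ⟨⟨?_, ?_⟩, ?_⟩
    · change _ < (Complex.log s).re
      rw [Complex.log_re]; exact Real.log_lt_log hσ0 hσs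
    · change _ < (Complex.log s).im
      rw [Complex.log_im]; exact h.1
    · change (Complex.log s).im < _
      rw [Complex.log_im]; exact h.2
  have := hF.eqOn_of_preconnected_of_frequently_eq hB hUc.isPreconnected hz₀U hfr hmem
  simpa [Complex.exp_log hsne] using this

lemma hk_F_eq_B {τ : ℝ} (hτ : 0 ≤ τ) {m : ℕ} {f : ℂ → ℂ} {a : ℕ → ℂ} (hf : ExpType τ f)
    (hexp : ∀ z : ℂ, HasSum (fun j : ℕ => a j * z ^ (2 * m + 1 + 2 * j)) (f z))
    (hint : IntegrableOn (fun x : ℝ => f x) (Set.Ioi 0))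
    {s : ℂ} (hs0 : 0 ≤ s.re) (hs : τ < ‖s‖) : hkF f s = hkB m a s := by
  obtain ⟨σ, hσ, hσs⟩ := exists_between hs
  have ht : Tendsto (fun k : ℕ => s + ((1 / ((k : ℝ) + 1) : ℝ) : ℂ)) atTop (𝓝 s) := by
    have := (Complex.continuous_ofReal.tendsto 0).comp
          (tendsto_one_div_add_atTop_nhds_zero_nat (𝕜 := ℝ))
    simpa using this.const_add s
  have hpos : ∀ k : ℕ, 0 < (s + ((1 / ((k : ℝ) + 1) : ℝ) : ℂ)).re := by
    intro k
    have : 0 < (1 / ((k : ℝ) + 1)) := by positivity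
    rw [Complex.add_re, Complex.ofReal_re]; linarith
  have ho : IsOpen {s : ℂ | σ < ‖s‖} := isOpen_lt continuous_const continuous_norm
  have hBt : Tendsto (fun k : ℕ => hkB m a (s + ((1 / ((k : ℝ) + 1) : ℝ) : ℂ))) atTop
      (𝓝 (hkB m a s)) :=
    (((hk_B_diff hτ hf hexp hσ).continuousOn.continuousAt (ho.mem_nhds hσs)).tendsto).comp ht
  have hFt : Tendsto (fun k : ℕ => hkF f (s + ((1 / ((k : ℝ) + 1) : ℝ) : ℂ))) atTop
      (𝓝 (hkF f s)) := by
    have h1 := (hk_F_cont hf.1.continuous hint) s hs0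
    refine Tendsto.comp (g := hkF f) h1 (tendsto_nhdsWithin_iff.2 ⟨ht, Eventually.of_forall fun k => ?_⟩)
    exact (hpos k).le
  refine tendsto_nhds_unique (hFt.congr' ?_) hBt
  filter_upwards [ht.eventually (ho.mem_nhds hσs)] with k hk
  exact hk_F_eq_B_open hτ hf hexp hint (hpos k) (hσ.trans hk)

lemma hk_int_exp (k : ℤ) : ∫ θ in (-(π/2))..(π/2), Complex.exp (2 * k * Complex.I * θ)
    = if k = 0 then (π : ℂ) else 0 := by
  split_ifs with h
  · subst h; simp
  · have hk : (2 * k * Complex.I : ℂ) ≠ 0 := by simp [h]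
    rw [integral_exp_mul_complex hk]
    have : Complex.exp (2 * k * Complex.I * ((π/2 : ℝ) : ℂ))
      = Complex.exp (2 * k * Complex.I * ((-(π/2) : ℝ) : ℂ)) := by
      rw [Complex.exp_eq_exp_iff_exists_int]
      refine ⟨k, ?_⟩
      push_cast; ring
    rw [this]; simp

lemma hk_sin_pow (p : ℕ) (θ : ℝ) : (Complex.sin θ) ^ (2 * p) =
    ∑ k ∈ Finset.range (2 * p + 1), (-1) ^ (p + k) / 4 ^ p * (2 * p).choose k *
      Complex.exp (2 * ((k : ℤ) - p : ℤ) * Complex.I * θ) := by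
  have h1 : Complex.sin θ ^ (2 * p) = (-1) ^ p / 4 ^ p *
      (Complex.exp (θ * Complex.I) + -Complex.exp (-(θ * Complex.I))) ^ (2 * p) := by
    rw [Complex.sin, pow_mul, pow_mul, ← div_pow, ← mul_pow]
    congr 1
    have := Complex.I_sq
    rw [neg_mul]
    linear_combination ((Complex.exp (-(θ * Complex.I)) - Complex.exp (θ * Complex.I)) ^ 2 / 4) * this
  rw [h1, add_pow, Finset.mul_sum]
  refine Finset.sum_congr rfl fun k hk => ?_
  have hk' : k ≤ 2 * p := by simp at hk; omega
  rw [neg_pow (Complex.exp _), ← Complex.exp_nat_mul, ← Complex.exp_nat_mul]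
  have h2 : (-1 : ℂ) ^ (2 * p - k) = (-1) ^ k := by
    have : (-1 : ℂ) ^ (2 * p - k) * (-1) ^ k * (-1) ^ k = (-1) ^ k := by
      rw [← pow_add]; rw [Nat.sub_add_cancel hk', pow_mul]; simp
    rw [← this, mul_assoc, ← pow_add, ← two_mul, pow_mul]; simp
  rw [h2]
  have h3 : Complex.exp (2 * ((k : ℤ) - p : ℤ) * Complex.I * θ) =
      Complex.exp (k * (θ * Complex.I)) * Complex.exp ((2 * p - k : ℕ) * (-(θ * Complex.I))) := by
    rw [← Complex.exp_add]; congr 1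
    push_cast [Nat.cast_sub hk']; ring
  rw [h3, pow_add]; ring

lemma hk_int_sin_exp (p : ℕ) (l : ℤ) :
    ∫ θ in (-(π/2))..(π/2), Complex.sin θ ^ (2 * p) * Complex.exp (2 * l * Complex.I * θ)
    = ∑ k ∈ Finset.range (2 * p + 1), (-1) ^ (p + k) / 4 ^ p * (2 * p).choose k *
      (if (k : ℤ) - p + l = 0 then (π : ℂ) else 0) := by
  simp_rw [hk_sin_pow, Finset.sum_mul]
  rw [intervalIntegral.integral_finsetSum]
  · refine Finset.sum_congr rfl fun k _ => ?_
    rw [← hk_int_exp, ← intervalIntegral.integral_const_mul]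
    congr 1; ext θ
    rw [mul_assoc, ← Complex.exp_add]; congr 2
    push_cast; ring
  · intro k _
    apply Continuous.intervalIntegrable; fun_prop

lemma hk_int_sin_cos (p l : ℕ) :
    ∫ θ in (-(π/2))..(π/2), Complex.sin θ ^ (2 * p) * Complex.cos (2 * l * θ)
    = if l ≤ p then (-1) ^ l / 4 ^ p * (2 * p).choose (p - l) * (π : ℂ) else 0 := by
  have h : ∀ θ : ℝ, Complex.sin θ ^ (2 * p) * Complex.cos (2 * l * θ) =
    (1/2) * (Complex.sin θ ^ (2 * p) * Complex.exp (2 * (l : ℤ) * Complex.I * θ)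
     + Complex.sin θ ^ (2 * p) * Complex.exp (2 * (-l : ℤ) * Complex.I * θ)) := by
    intro θ
    rw [Complex.cos]
    push_cast
    ring_nf
  simp_rw [h]
  rw [intervalIntegral.integral_const_mul, intervalIntegral.integral_add
    (by apply Continuous.intervalIntegrable; fun_prop)
    (by apply Continuous.intervalIntegrable; fun_prop), hk_int_sin_exp, hk_int_sin_exp]
  split_ifs with hl
  · rw [Finset.sum_eq_single (p - l), Finset.sum_eq_single (p + l)]
    · rw [if_pos (by omega), if_pos (by omega)]
      have e1 : (2 * p).choose (p + l) = (2 * p).choose (p - l) := by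
        rw [← Nat.choose_symm (by omega : p - l ≤ 2 * p)]; congr 1; omega
      have e2 : (-1 : ℂ) ^ (p + (p + l)) = (-1) ^ l := by
        rw [← add_assoc, ← two_mul, pow_add, pow_mul]; simp
      have e3 : (-1 : ℂ) ^ (p + (p - l)) = (-1) ^ l := by
        rw [← e2, show p + (p + l) = p + (p - l) + 2 * l by omega, pow_add _ _ (2 * l), pow_mul]
        simp
      rw [e1, e2, e3]; ring
    · intro b _ hb; rw [if_neg (by omega)]; simp
    · intro hb; simp at hb; omega
    · intro b _ hb; rw [if_neg (by omega)]; simp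
    · intro hb; simp at hb; omega
  · rw [Finset.sum_eq_zero, Finset.sum_eq_zero]
    · simp
    · intro k hk; simp at hk; rw [if_neg (by omega)]; simp
    · intro k hk; simp at hk; rw [if_neg (by omega)]; simp

lemma hk_bessel_cos (l : ℕ) (y : ℝ) :
    ∫ θ in (-(π/2))..(π/2), Complex.cos (y * Complex.sin θ) * Complex.cos (2 * l * θ)
    = π * (besselJ (2 * l) y : ℂ) := by
  have key := intervalIntegral.hasSum_integral_of_dominated_convergence
    (μ := volume) (a := -(π/2)) (b := π/2)
    (F := fun (p : ℕ) (θ : ℝ) => (-1) ^ p * (y * Complex.sin θ) ^ (2 * p) / ((2 * p).factorial : ℂ)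
      * Complex.cos (2 * l * θ))
    (f := fun θ : ℝ => Complex.cos (y * Complex.sin θ) * Complex.cos (2 * l * θ))
    (fun p _ => |y| ^ (2 * p) / (2 * p).factorial)
    (fun p => by apply Continuous.aestronglyMeasurable; fun_prop)
    (fun p => Eventually.of_forall fun θ _ => by
      have h1 : ‖Complex.sin θ‖ ≤ 1 := by
        rw [← Complex.ofReal_sin, Complex.norm_real]; exact Real.abs_sin_le_one _
      have h2 : ‖Complex.cos (2 * l * θ)‖ ≤ 1 := by
        rw [show (2 * l * θ : ℂ) = ((2 * l * θ : ℝ) : ℂ) by push_cast; rfl,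
          ← Complex.ofReal_cos, Complex.norm_real]; exact Real.abs_cos_le_one _
      simp only [norm_mul, norm_div, norm_pow, norm_neg, norm_one, one_pow, one_mul,
        Complex.norm_real, Real.norm_eq_abs, Complex.norm_natCast]
      calc _ ≤ (|y| * 1) ^ (2 * p) / (2 * p).factorial * 1 := by gcongr
        _ = _ := by simp)
    (Eventually.of_forall fun θ _ => (Real.summable_pow_div_factorial |y|).comp_injective
      (i := fun p : ℕ => 2 * p) (by intro a b h; simpa using h))
    (by simp)
    (Eventually.of_forall fun θ _ => (Complex.hasSum_cos _).mul_right _)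
  have h1 : ∀ p : ℕ, ∫ θ in (-(π/2))..(π/2), (-1) ^ p * (y * Complex.sin θ) ^ (2 * p) /
      ((2 * p).factorial : ℂ) * Complex.cos (2 * l * θ)
      = (-1) ^ p * y ^ (2 * p) / ((2 * p).factorial : ℂ) *
       (if l ≤ p then (-1) ^ l / 4 ^ p * (2 * p).choose (p - l) * (π : ℂ) else 0) := by
    intro p
    rw [← hk_int_sin_cos, ← intervalIntegral.integral_const_mul]
    congr 1; ext θ; rw [mul_pow]; ring
  simp only [h1] at key
  have hinj : Function.Injective (fun k : ℕ => l + k) := add_right_injective l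
  rw [← hinj.hasSum_iff] at key
  · rw [← key.tsum_eq, besselJ, Complex.ofReal_tsum, ← tsum_mul_left]
    refine tsum_congr fun k => ?_
    simp only [Function.comp_apply]
    rw [if_pos (by omega), Nat.add_sub_cancel_left, Nat.cast_choose ℂ (by omega),
      show 2 * (l + k) - k = 2 * l + k by omega]
    have e1 : ((2 * (l + k)).factorial : ℂ) ≠ 0 := Nat.cast_ne_zero.2 (Nat.factorial_ne_zero _)
    have e2 : ((2 * l + k).factorial : ℂ) ≠ 0 := Nat.cast_ne_zero.2 (Nat.factorial_ne_zero _)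
    have e3 : (k.factorial : ℂ) ≠ 0 := Nat.cast_ne_zero.2 (Nat.factorial_ne_zero _)
    have e4 : (-1 : ℂ) ^ (l + k) * (-1) ^ l = (-1) ^ k := by
      rw [pow_add, mul_right_comm, ← pow_add, ← two_mul, pow_mul]; simp
    have e5 : ((y:ℂ) / 2) ^ (2 * l + 2 * k) = y ^ (2 * (l + k)) / 4 ^ (l + k) := by
      rw [← mul_add, div_pow, pow_mul 2]; norm_num
    push_cast
    rw [e5, ← e4]
    field_simp
  · intro p hp
    rw [if_neg, mul_zero]
    intro h
    exact hp ⟨p - l, by simp; omega⟩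

lemma hk_bessel_exp (l : ℕ) (y : ℝ) :
    ∫ θ in (-(π/2))..(π/2), Complex.exp (-(Complex.I * Complex.sin θ * y)) * Complex.cos (2 * l * θ)
    = π * (besselJ (2 * l) y : ℂ) := by
  have hodd : ∫ θ in (-(π/2))..(π/2), Complex.sin (y * Complex.sin θ) * Complex.cos (2 * l * θ) = 0 := by
    have := intervalIntegral.integral_comp_neg (a := -(π/2)) (b := π/2)
      (fun θ : ℝ => Complex.sin (y * Complex.sin θ) * Complex.cos (2 * l * θ))
    simp only [Complex.ofReal_neg, Complex.sin_neg, mul_neg, Complex.cos_neg, neg_mul, neg_neg,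
      intervalIntegral.integral_neg] at this
    exact CharZero.eq_neg_self_iff.1 this.symm
  have h : ∀ θ : ℝ, Complex.exp (-(Complex.I * Complex.sin θ * y)) * Complex.cos (2 * l * θ) =
     Complex.cos (y * Complex.sin θ) * Complex.cos (2 * l * θ) - Complex.I *
     (Complex.sin (y * Complex.sin θ) * Complex.cos (2 * l * θ)) := by
    intro θ
    rw [show -(Complex.I * Complex.sin θ * y) = (-(y * Complex.sin θ)) * Complex.I by ring,
      Complex.exp_mul_I, Complex.cos_neg, Complex.sin_neg]; ring
  simp_rw [h]
  rw [intervalIntegral.integral_sub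
    (by apply Continuous.intervalIntegrable; fun_prop)
    (by apply Continuous.intervalIntegrable; fun_prop), intervalIntegral.integral_const_mul, hodd,
    hk_bessel_cos]
  simp

lemma hk_left_edge {f : ℂ → ℂ} (hf : Continuous f)
    (hint : IntegrableOn (fun x : ℝ => f x) (Set.Ioi 0)) (l : ℕ) (lam : ℝ) :
    ∫ θ in (-(π/2))..(π/2), hkF f (lam * (Complex.I * Complex.sin θ)) * Complex.cos (2 * l * θ)
    = π * ∫ x in Set.Ioi (0 : ℝ), f x * (besselJ (2 * l) (lam * x) : ℂ) := by
  have h1 : ∀ θ : ℝ, hkF f (lam * (Complex.I * Complex.sin θ)) * Complex.cos (2 * l * θ) =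
      ∫ x in Set.Ioi (0:ℝ), f x * (Complex.exp (-(Complex.I * Complex.sin θ * ((lam * x : ℝ) : ℂ)))
        * Complex.cos (2 * l * θ)) := by
    intro θ
    rw [hkF, ← integral_mul_const]
    congr 1; ext x
    rw [mul_assoc]; congr 3
    push_cast; ring
  simp_rw [h1]
  rw [intervalIntegral_integral_swap, ← integral_const_mul]
  · refine setIntegral_congr_fun measurableSet_Ioi fun x hx => ?_
    rw [intervalIntegral.integral_const_mul, hk_bessel_exp]; ring
  · have hb : Integrable (fun z : ℝ × ℝ => (1:ℂ) * f z.2)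
      ((volume.restrict (Set.uIoc (-(π/2)) (π/2))).prod (volume.restrict (Set.Ioi (0:ℝ)))) :=
      Integrable.mul_prod (f := fun _ : ℝ => (1:ℂ)) (g := fun x : ℝ => f x)
        (continuous_const.integrableOn_uIoc) hint
    refine Integrable.mono' hb.norm ?_ (Eventually.of_forall fun z => ?_)
    · apply Continuous.aestronglyMeasurable
      unfold Function.uncurry
      fun_prop
    · have e1 : ‖Complex.exp (-(Complex.I * Complex.sin z.1 * ((lam * z.2 : ℝ) : ℂ)))‖ = 1 := by
        rw [← Complex.ofReal_sin, Complex.norm_exp]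
        simp
      have e2 : ‖Complex.cos (2 * l * z.1)‖ ≤ 1 := by
        rw [show (2 * l * z.1 : ℂ) = ((2 * l * z.1 : ℝ) : ℂ) by push_cast; rfl,
          ← Complex.ofReal_cos, Complex.norm_real]; exact Real.abs_cos_le_one _
      simp only [Function.uncurry, norm_mul, e1, one_mul, norm_one]
      exact mul_le_of_le_one_right (norm_nonneg _) e2

lemma hk_sinh_re (u θ : ℝ) : (Complex.sinh (u + θ * Complex.I)).re = Real.sinh u * Real.cos θ := by
  rw [Complex.sinh_add, Complex.sinh_mul_I, Complex.cosh_mul_I,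
    ← Complex.ofReal_sinh, ← Complex.ofReal_cosh, ← Complex.ofReal_cos, ← Complex.ofReal_sin]
  simp only [Complex.add_re, Complex.mul_re, Complex.mul_im, Complex.ofReal_re, Complex.ofReal_im,
    Complex.I_re, Complex.I_im]
  ring

lemma hk_sinh_norm (ζ : ℂ) : Real.sinh ζ.re ≤ ‖Complex.sinh ζ‖ := by
  rw [Complex.sinh, norm_div, Real.sinh_eq]
  have := norm_sub_norm_le (Complex.exp ζ) (Complex.exp (-ζ))
  rw [Complex.norm_exp, Complex.norm_exp, Complex.neg_re] at this
  simp only [Complex.norm_ofNat]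
  linarith

lemma hk_cosh_norm (ζ : ℂ) : ‖Complex.cosh ζ‖ ≤ Real.exp |ζ.re| := by
  rw [Complex.cosh, norm_div, Complex.norm_ofNat]
  have := norm_add_le (Complex.exp ζ) (Complex.exp (-ζ))
  rw [Complex.norm_exp, Complex.norm_exp, Complex.neg_re] at this
  have h1 : Real.exp ζ.re ≤ Real.exp |ζ.re| := Real.exp_le_exp.2 (le_abs_self _)
  have h2 : Real.exp (-ζ.re) ≤ Real.exp |ζ.re| := Real.exp_le_exp.2 (neg_le_abs _)
  linarith

theorem hankel_vanishes_even_order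
    (τ : ℝ) (hτ : 0 ≤ τ) (m l : ℕ) (hl : l < m + 1)
    (f : ℂ → ℂ) (a : ℕ → ℂ) (ha : a 0 ≠ 0)
    (hf : ExpType τ f)
    (hexp : ∀ z : ℂ, HasSum (fun j : ℕ => a j * z ^ (2 * m + 1 + 2 * j)) (f z))
    (hreal : ∀ x : ℝ, 0 ≤ x → (f x).im = 0)
    (hint : IntegrableOn (fun x : ℝ => f x) (Set.Ioi 0)) :
    ∀ lam : ℝ, τ < lam →
      ∫ x in Set.Ioi (0 : ℝ), f x * (besselJ (2 * l) (lam * x) : ℂ) = 0 := by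
  intro lam hlam
  have hl0 : 0 < lam := by linarith
  have hfc := hf.1.continuous
  set H : ℂ → ℂ := fun ζ => hkF f (lam * Complex.sinh ζ) * Complex.cosh (2 * l * ζ) with hH
  have hpi : -(π/2) ≤ π/2 := by have := Real.pi_pos; linarith
  have hrect : ∀ R : ℝ, 0 ≤ R → (∫ y in (-(π/2))..(π/2), H (R + y * Complex.I)) =
      ∫ y in (-(π/2))..(π/2), H (0 + y * Complex.I) := by
    intro R hR
    have key := Complex.integral_boundary_rect_eq_zero_of_continuousOn_of_differentiableOn H
      ⟨0, -(π/2)⟩ ⟨R, π/2⟩ (by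
        refine ContinuousOn.mul ((hk_F_cont hfc hint).comp (by fun_prop) ?_) (by fun_prop)
        intro ζ hζ
        rw [Complex.mem_reProdIm] at hζ
        simp only [Set.uIcc_of_le hR, Set.uIcc_of_le hpi] at hζ
        change 0 ≤ (lam * Complex.sinh ζ).re
        rw [Complex.re_ofReal_mul, ← Complex.re_add_im ζ, hk_sinh_re]
        have h1 := Real.sinh_nonneg_iff.2 hζ.1.1
        have h2 := Real.cos_nonneg_of_mem_Icc hζ.2
        positivity) (by
        intro ζ hζ
        rw [Complex.mem_reProdIm] at hζ
        simp only [min_eq_left hR, max_eq_right hR, min_eq_left hpi, max_eq_right hpi] at hζ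
        have h0 : 0 < (lam * Complex.sinh ζ).re := by
          rw [Complex.re_ofReal_mul, ← Complex.re_add_im ζ, hk_sinh_re]
          have h1 := Real.sinh_pos_iff.2 hζ.1.1
          have h2 := Real.cos_pos_of_mem_Ioo hζ.2
          positivity
        refine DifferentiableAt.differentiableWithinAt ?_
        refine DifferentiableAt.mul ?_ (by fun_prop)
        exact DifferentiableAt.comp (g := hkF f) ζ (hk_F_diff hfc hint h0) (by fun_prop))
    have hedge : ∀ x : ℝ, H (x + (-(π/2) : ℝ) * Complex.I) = H (x + (π/2 : ℝ) * Complex.I) := by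
      intro x
      have hs1 : Complex.sinh (x + (π/2 : ℝ) * Complex.I) = Real.cosh x * Complex.I := by
        rw [Complex.sinh_add, Complex.sinh_mul_I, Complex.cosh_mul_I, ← Complex.ofReal_cos,
          ← Complex.ofReal_sin]
        simp
      have hs2 : Complex.sinh (x + (-(π/2) : ℝ) * Complex.I) = -(Real.cosh x * Complex.I) := by
        rw [Complex.sinh_add, Complex.sinh_mul_I, Complex.cosh_mul_I, ← Complex.ofReal_cos,
          ← Complex.ofReal_sin]
        simp
      have hc : Complex.cosh (2 * l * (x + (-(π/2) : ℝ) * Complex.I)) =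
          Complex.cosh (2 * l * (x + (π/2 : ℝ) * Complex.I)) := by
        rw [← Complex.cos_mul_I, ← Complex.cos_mul_I]
        rw [show 2 * l * (x + ((-(π/2) : ℝ) : ℂ) * Complex.I) * Complex.I =
          2 * l * (x + ((π/2 : ℝ) : ℂ) * Complex.I) * Complex.I + (l : ℂ) * (2 * π) by
          push_cast
          linear_combination (-2 * l * π : ℂ) * Complex.I_sq]
        exact Complex.cos_add_nat_mul_two_pi _ _
      have hn : τ < ‖(lam : ℂ) * (Real.cosh x * Complex.I)‖ := by
        rw [norm_mul, norm_mul, Complex.norm_I, mul_one, Complex.norm_real, Complex.norm_real,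
          Real.norm_of_nonneg hl0.le, Real.norm_of_nonneg (Real.cosh_pos x).le]
        have := Real.one_le_cosh x
        nlinarith
      simp only [hH, hs1, hs2, hc]
      rw [mul_neg, hk_F_eq_B hτ hf hexp hint (by simp) (by rwa [norm_neg]),
        hk_F_eq_B hτ hf hexp hint (by simp) hn, hk_B_even]
    simp only [hedge, sub_self, zero_add, Complex.ofReal_zero] at key
    rw [sub_eq_zero] at key
    simpa [smul_eq_mul] using key
  obtain ⟨K, hK, hKb⟩ := hk_B_bound hτ hf hexp hlam
  have hbound : ∀ R : ℝ, 1 ≤ R → ∀ y ∈ Set.uIoc (-(π/2)) (π/2),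
      ‖H (R + y * Complex.I)‖ ≤ K / (lam / 4) ^ (2 * m + 2) * Real.exp (-R) := by
    intro R hR y hy
    rw [Set.uIoc_of_le hpi] at hy
    set ζ : ℂ := R + y * Complex.I with hζ
    have hre : ζ.re = R := by simp [hζ]
    have hE : 4 ≤ Real.exp R * Real.exp R := by
      have h1 := Real.add_one_le_exp R
      nlinarith
    have hsinh : Real.exp R / 4 ≤ Real.sinh R := by
      rw [Real.sinh_eq]
      have h1 : Real.exp R * Real.exp (-R) = 1 := by rw [← Real.exp_add]; simp
      have h2 := Real.exp_pos R
      have h3 := Real.exp_pos (-R)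
      nlinarith
    have hsn : lam / 4 * Real.exp R ≤ ‖(lam : ℂ) * Complex.sinh ζ‖ := by
      rw [norm_mul, Complex.norm_real, Real.norm_of_nonneg hl0.le]
      have := hk_sinh_norm ζ
      rw [hre] at this
      nlinarith
    have hsinh1 : 1 ≤ Real.sinh R := by
      have := Real.self_le_sinh_iff.2 (by linarith : 0 ≤ R); linarith
    have hln : lam ≤ ‖(lam : ℂ) * Complex.sinh ζ‖ := by
      rw [norm_mul, Complex.norm_real, Real.norm_of_nonneg hl0.le]
      have := hk_sinh_norm ζ
      rw [hre] at this
      nlinarith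
    have hre0 : 0 ≤ ((lam : ℂ) * Complex.sinh ζ).re := by
      rw [Complex.re_ofReal_mul, hζ, hk_sinh_re]
      have h1 := Real.sinh_nonneg_iff.2 (by linarith : 0 ≤ R)
      have h2 := Real.cos_nonneg_of_mem_Icc ⟨hy.1.le, hy.2⟩
      positivity
    have h1 : ‖hkF f (lam * Complex.sinh ζ)‖ ≤ K / (lam / 4 * Real.exp R) ^ (2 * m + 2) := by
      rw [hk_F_eq_B hτ hf hexp hint hre0 (by linarith)]
      refine (hKb _ hln).trans ?_
      gcongr
    have h2 : ‖Complex.cosh (2 * l * ζ)‖ ≤ Real.exp (2 * l * R) := by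
      refine (hk_cosh_norm _).trans_eq ?_
      have : (2 * l * ζ).re = 2 * l * R := by
        rw [show (2 * l * ζ : ℂ) = ((2 * l : ℝ) : ℂ) * ζ by push_cast; rfl,
          Complex.re_ofReal_mul, hre]
      rw [this, abs_of_nonneg (by positivity)]
    have h3 : Real.exp (2 * l * R) ≤ Real.exp R ^ (2 * m + 2) * Real.exp (-R) := by
      rw [← Real.exp_nat_mul, ← Real.exp_add]
      apply Real.exp_le_exp.2
      push_cast
      have : (l : ℝ) ≤ m := by exact_mod_cast (by omega : l ≤ m)
      nlinarith
    calc ‖H ζ‖ = ‖hkF f (lam * Complex.sinh ζ)‖ * ‖Complex.cosh (2 * l * ζ)‖ := norm_mul _ _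
      _ ≤ K / (lam / 4 * Real.exp R) ^ (2 * m + 2) *
          (Real.exp R ^ (2 * m + 2) * Real.exp (-R)) := by
        gcongr
        exact h2.trans h3
      _ = _ := by
        rw [mul_pow]
        have := (Real.exp_pos R).ne'
        field_simp
  have hzero : ∫ y in (-(π/2))..(π/2), H (0 + y * Complex.I) = 0 := by
    rw [← norm_le_zero_iff]
    have ht : Tendsto (fun R : ℝ => K / (lam / 4) ^ (2 * m + 2) * Real.exp (-R) *
        |π/2 - -(π/2)|) atTop (𝓝 (K / (lam / 4) ^ (2 * m + 2) * 0 * |π/2 - -(π/2)|)) :=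
      (Real.tendsto_exp_neg_atTop_nhds_zero.const_mul _).mul_const _
    rw [mul_zero, zero_mul] at ht
    refine ge_of_tendsto ht ?_
    filter_upwards [eventually_ge_atTop 1] with R hR
    rw [← hrect R (by linarith)]
    exact intervalIntegral.norm_integral_le_of_norm_le_const (hbound R hR)
  have hleft := hk_left_edge hfc hint l lam
  have hsame : ∀ θ : ℝ, H (0 + θ * Complex.I) =
      hkF f (lam * (Complex.I * Complex.sin θ)) * Complex.cos (2 * l * θ) := by
    intro θ
    simp only [hH, zero_add]
    rw [Complex.sinh_mul_I, ← mul_assoc (2 * (l:ℂ)), Complex.cosh_mul_I, mul_comm Complex.I]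
  simp only [hsame] at hzero
  rw [hzero] at hleft
  have hpi0 : (π : ℂ) ≠ 0 := by exact_mod_cast Real.pi_ne_zero
  exact (mul_eq_zero.1 hleft.symm).resolve_left hpi0
end

section
/- Let τ ≥ 0, let m and l be nonnegative integers with l < m, and let h : ℂ → ℂ be an entire function of exponential type τ such that h(z) = ∑_{j=0}^∞ b_j z^{2m+2j} for all z ∈ ℂ, where b_0 ≠ 0, and such that the restriction of h to [0,∞) is real-valued and absolutely integrable, i.e. ∫_0^∞ |h(x)| dx < ∞. Then for every real λ > τ, the Hankel transform vanishes: ∫_0^∞ h(x) J_{2l+1}(λx) dx = 0. -/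
open MeasureTheory Real

theorem A0 {ι : Type*} [Countable ι] (F : ι → ℝ → ℂ) (f : ℝ → ℂ) (c : ι → ℝ) (hc : Summable c)
    (hF : ∀ i, Continuous (F i)) (hb : ∀ i t, ‖F i t‖ ≤ c i) (hs : ∀ t, HasSum (fun i => F i t) (f t))
    (a b : ℝ) : HasSum (fun i => ∫ t in a..b, F i t) (∫ t in a..b, f t) := by
  apply intervalIntegral.hasSum_integral_of_dominated_convergence (fun i _ => c i)
  · intro i; exact (hF i).aestronglyMeasurable
  · intro i; exact Filter.Eventually.of_forall fun t _ => hb i t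
  · exact Filter.Eventually.of_forall fun t _ => hc
  · exact intervalIntegrable_const
  · exact Filter.Eventually.of_forall fun t _ => hs t

theorem A1 (k : ℤ) : ∫ θ in (-(π/2))..(3*π/2), Complex.exp (k * θ * Complex.I)
    = if k = 0 then (2*π : ℂ) else 0 := by
  split_ifs with h
  · subst h; simp; ring
  · have hc : (k * Complex.I : ℂ) ≠ 0 := by simp [h]
    have := integral_exp_mul_complex (a := -(π/2)) (b := 3*π/2) hc
    have e : ∀ θ : ℝ, (k * θ * Complex.I : ℂ) = k * Complex.I * θ := by intro θ; ring
    simp_rw [e]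
    rw [this]
    have : Complex.exp (k * Complex.I * ((3*π/2 : ℝ):ℂ))
        = Complex.exp (k * Complex.I * ((-(π/2) : ℝ):ℂ)) := by
      rw [Complex.exp_eq_exp_iff_exists_int]
      exact ⟨k, by push_cast; ring⟩
    rw [this]; simp

theorem A2 (m : ℕ) (h : ℂ → ℂ) (b : ℕ → ℂ)
    (hexp : ∀ z : ℂ, HasSum (fun j : ℕ => b j * z ^ (2 * m + 2 * j)) (h z))
    (r M : ℝ) (hr : 0 ≤ r) (hM : ∀ z : ℂ, ‖z‖ = r → ‖h z‖ ≤ M) (j : ℕ) :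
    ‖b j‖ * r ^ (2 * m + 2 * j) ≤ M := by
  have hsum : Summable (fun i => ‖b i‖ * r ^ (2 * m + 2 * i)) := by
    have := (hexp (r:ℂ)).summable.norm
    simpa [abs_of_nonneg hr] using this
  have key := A0 (fun i θ => b i * (r * Complex.exp (θ * Complex.I)) ^ (2 * m + 2 * i)
      * Complex.exp (-((2 * m + 2 * j : ℕ) : ℂ) * θ * Complex.I))
    (fun θ => h (r * Complex.exp (θ * Complex.I))
      * Complex.exp (-((2 * m + 2 * j : ℕ) : ℂ) * θ * Complex.I)) _ hsum
      (fun i => by fun_prop) ?_ (fun t => (hexp _).mul_right _) (-(π/2)) (3*π/2)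
  swap
  · intro i t
    have e : (-((2 * m + 2 * j : ℕ) : ℂ) * t * Complex.I)
      = ((-((2 * m + 2 * j : ℕ) : ℝ) * t : ℝ) : ℂ) * Complex.I := by push_cast; ring
    rw [e]
    simp only [norm_mul, norm_pow, Complex.norm_exp_ofReal_mul_I]
    simp [abs_of_nonneg hr]
  have e2 : ∀ i, ∫ θ in (-(π/2))..(3*π/2), b i * (r * Complex.exp (θ * Complex.I)) ^ (2 * m + 2 * i)
      * Complex.exp (-((2 * m + 2 * j : ℕ) : ℂ) * θ * Complex.I)
      = if i = j then b j * r ^ (2 * m + 2 * j) * (2 * π) else 0 := by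
    intro i
    have : ∀ θ : ℝ, b i * (r * Complex.exp (θ * Complex.I)) ^ (2 * m + 2 * i)
      * Complex.exp (-((2 * m + 2 * j : ℕ) : ℂ) * θ * Complex.I)
      = b i * r ^ (2 * m + 2 * i) * Complex.exp ((2 * i - 2 * j : ℤ) * θ * Complex.I) := by
      intro θ
      rw [mul_pow, ← Complex.exp_nat_mul]
      rw [mul_assoc, mul_assoc, mul_assoc, mul_assoc, ← Complex.exp_add]
      congr 3
      push_cast; ring_nf
    simp_rw [this]
    rw [intervalIntegral.integral_const_mul, A1]
    by_cases hij : i = j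
    · subst hij; simp
    · rw [if_neg hij, if_neg (by omega), mul_zero]
  simp_rw [e2] at key
  have key2 := key.unique (hasSum_ite_eq j _)
  have hn := intervalIntegral.norm_integral_le_of_norm_le_const (a := -(π/2)) (b := 3*π/2) (C := M)
    (f := fun θ : ℝ => h (r * Complex.exp (θ * Complex.I))
      * Complex.exp (-((2 * m + 2 * j : ℕ) : ℂ) * θ * Complex.I)) (by
    intro t _
    have e : (-((2 * m + 2 * j : ℕ) : ℂ) * t * Complex.I)
      = ((-((2 * m + 2 * j : ℕ) : ℝ) * t : ℝ) : ℂ) * Complex.I := by push_cast; ring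
    rw [e, norm_mul, Complex.norm_exp_ofReal_mul_I, mul_one]
    apply hM
    simp [Complex.norm_exp_ofReal_mul_I, abs_of_nonneg hr])
  rw [key2] at hn
  have hpi := Real.pi_pos
  have e3 : |3 * π / 2 - -(π / 2)| = 2 * π := by rw [abs_of_pos (by linarith)]; ring
  rw [e3] at hn
  simp only [norm_mul, norm_pow, Complex.norm_real, Real.norm_eq_abs, abs_of_nonneg hr,
    abs_of_pos hpi, Complex.norm_ofNat] at hn
  exact le_of_mul_le_mul_right hn (by positivity)

theorem B1 (z : ℂ) : HasSum (fun k : ℕ => z ^ k / (k.factorial : ℂ)) (NormedSpace.exp z) := 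
   NormedSpace.expSeries_div_hasSum_exp z
theorem B2 (z : ℂ) : HasSum (fun k : ℕ => z ^ k / (k.factorial : ℂ)) (Complex.exp z) := by
  have := B1 z
  rwa [← Complex.exp_eq_exp_ℂ] at this
theorem A3b (f g : ℕ → ℂ) (a b : ℂ) (hf : HasSum f a) (hg : HasSum g b) :
    HasSum (fun p : ℕ × ℕ => f p.1 * g p.2) (a * b) :=
  hf.mul hg (summable_mul_of_summable_norm hf.summable.norm hg.summable.norm)

theorem A3a (z w : ℂ) : HasSum (fun p : ℕ × ℕ => z ^ p.1 / (p.1.factorial : ℂ) * (w ^ p.2 / (p.2.factorial : ℂ)))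
    (Complex.exp z * Complex.exp w) := by
  have := A3b _ _ _ _ (B2 z) (B2 w)
  exact this

theorem A3 (n : ℕ) (x : ℝ) : (besselJ n x : ℂ) * (2 * π) =
    ∫ θ in (-(π/2))..(3*π/2), Complex.exp (n * θ * Complex.I)
      * Complex.exp (-(x * Complex.sinh (θ * Complex.I))) := by
  let c : ℕ → ℝ := fun k => |x / 2| ^ k / k.factorial
  have hc : Summable c := Real.summable_pow_div_factorial _
  have hc2 : Summable (fun p : ℕ × ℕ => c p.1 * c p.2) :=
    hc.mul_of_nonneg hc (fun k => by positivity) (fun k => by positivity)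
  have key := A0 (fun (p : ℕ × ℕ) θ => Complex.exp (n * θ * Complex.I) *
      ((x / 2 * Complex.exp (-(θ * Complex.I))) ^ p.1 / p.1.factorial *
       ((-(x / 2) * Complex.exp (θ * Complex.I)) ^ p.2 / p.2.factorial)))
    (fun θ => Complex.exp (n * θ * Complex.I)
      * Complex.exp (-(x * Complex.sinh (θ * Complex.I)))) _ hc2 (fun i => by fun_prop) ?_ ?_
      (-(π/2)) (3*π/2)
  rotate_left
  · rintro ⟨k, j⟩ t
    have e1 : (n * t * Complex.I : ℂ) = ((n * t : ℝ) : ℂ) * Complex.I := by push_cast; ring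
    have e2 : (-(t * Complex.I) : ℂ) = ((-t : ℝ) : ℂ) * Complex.I := by push_cast; ring
    rw [e1, e2]
    simp only [norm_mul, norm_div, norm_pow, norm_neg, Complex.norm_exp_ofReal_mul_I,
      Complex.norm_real, Complex.norm_natCast, c]
    simp [abs_div]
  · intro t
    apply HasSum.mul_left
    have e : Complex.exp (-(x * Complex.sinh (t * Complex.I))) =
      Complex.exp (x / 2 * Complex.exp (-(t * Complex.I))) *
        Complex.exp (-(x / 2) * Complex.exp (t * Complex.I)) := by
      rw [← Complex.exp_add, Complex.sinh]; congr 1; ring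
    rw [e]
    exact A3a _ _
  have e2 : ∀ p : ℕ × ℕ, ∫ θ in (-(π/2))..(3*π/2), Complex.exp (n * θ * Complex.I) *
      ((x / 2 * Complex.exp (-(θ * Complex.I))) ^ p.1 / p.1.factorial *
       ((-(x / 2) * Complex.exp (θ * Complex.I)) ^ p.2 / p.2.factorial))
      = (x/2 : ℂ)^p.1 / p.1.factorial * ((-(x/2))^p.2 / p.2.factorial) *
        if (n + p.2 - p.1 : ℤ) = 0 then (2*π : ℂ) else 0 := by
    intro p
    rw [← A1, ← intervalIntegral.integral_const_mul]
    congr 1; ext θ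
    rw [mul_pow, mul_pow, ← Complex.exp_nat_mul, ← Complex.exp_nat_mul]
    have : Complex.exp (((n + p.2 - p.1 : ℤ) : ℂ) * θ * Complex.I) = Complex.exp (n * θ * Complex.I)
      * Complex.exp (p.1 * -(θ * Complex.I)) * Complex.exp (p.2 * (θ * Complex.I)) := by
      rw [← Complex.exp_add, ← Complex.exp_add]; congr 1; push_cast; ring
    rw [this]; ring
  simp_rw [e2] at key
  have hinj : Function.Injective (fun j : ℕ => (n + j, j)) := fun a b hab => by simpa using hab
  rw [← hinj.hasSum_iff] at key
  swap
  · rintro ⟨k, j⟩ hp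
    rw [if_neg, mul_zero]
    intro hh
    apply hp
    refine ⟨j, ?_⟩
    simp only at hh
    ext <;> simp; omega
  rw [← key.tsum_eq, besselJ, Complex.ofReal_tsum, ← tsum_mul_right]
  congr 1; ext k
  simp only [Function.comp]
  rw [if_pos (by push_cast; ring)]
  push_cast
  rw [neg_pow (x/2 : ℂ)]
  field_simp
  ring

theorem A4 (l : ℕ) (x : ℝ) : (besselJ (2 * l + 1) x : ℂ) * (2 * π) =
    ∫ v in (-(π/2))..(π/2), 2 * Complex.sinh ((2 * l + 1 : ℕ) * (v * Complex.I))
      * Complex.exp (-(x * Complex.sinh (v * Complex.I))) := by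
  rw [A3]
  set f : ℝ → ℂ := fun θ => Complex.exp ((2 * l + 1 : ℕ) * θ * Complex.I)
      * Complex.exp (-(x * Complex.sinh (θ * Complex.I))) with hf
  have hfc : Continuous f := by
    rw [hf]; simp only [Complex.sinh]; fun_prop
  rw [← intervalIntegral.integral_add_adjacent_intervals (b := π / 2)
    (hfc.intervalIntegrable _ _) (hfc.intervalIntegrable _ _)]
  have : ∫ θ in (π/2)..(3*π/2), f θ = ∫ θ in (-(π/2))..(π/2), f (π - θ) := by
    rw [intervalIntegral.integral_comp_sub_left]; congr 1 <;> ring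
  have hgc : Continuous (fun θ => f (π - θ)) := hfc.comp (by fun_prop)
  rw [this, ← intervalIntegral.integral_add (hfc.intervalIntegrable _ _)
    (hgc.intervalIntegrable _ _)]
  congr 1; ext v
  simp only [hf]
  have e1 : Complex.sinh (((π - v : ℝ) : ℂ) * Complex.I) = Complex.sinh (v * Complex.I) := by
    rw [Complex.sinh_mul_I, Complex.sinh_mul_I]; push_cast; rw [Complex.sin_pi_sub]
  have e2 : Complex.exp ((2 * l + 1 : ℕ) * ((π - v : ℝ) : ℂ) * Complex.I)
      = - Complex.exp (-((2 * l + 1 : ℕ) * (v * Complex.I))) := by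
    have : ((2 * l + 1 : ℕ) * ((π - v : ℝ) : ℂ) * Complex.I) =
      -((2 * l + 1 : ℕ) * (v * Complex.I)) + π * Complex.I + l * (2 * π * Complex.I) := by
      push_cast; ring
    rw [this, Complex.exp_add, Complex.exp_nat_mul_two_pi_mul_I, Complex.exp_add,
      Complex.exp_pi_mul_I]; ring
  have e3 : 2 * Complex.sinh ((2 * l + 1 : ℕ) * (v * Complex.I)) =
    Complex.exp ((2 * l + 1 : ℕ) * v * Complex.I)
      - Complex.exp (-((2 * l + 1 : ℕ) * (v * Complex.I))) := by
    rw [Complex.sinh, ← mul_assoc]; ring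
  rw [e1, e2, e3]
  ring

theorem C1a (s : ℝ) (hs : 0 < s) (N : ℕ) :
    IntegrableOn (fun x : ℝ => x ^ N * Real.exp (-(s * x))) (Set.Ioi 0) := by
  have := integrableOn_rpow_mul_exp_neg_mul_rpow (p := 1) (s := N) (b := s)
    (by have : (0:ℝ) ≤ N := Nat.cast_nonneg N
        linarith) one_pos hs
  simpa using this

theorem C1b (s : ℝ) (hs : 0 < s) (N : ℕ) :
    ∫ x in Set.Ioi (0:ℝ), x ^ N * Real.exp (-(s * x)) = N.factorial / s ^ (N + 1) := by
  have := Real.integral_rpow_mul_exp_neg_mul_Ioi (a := N + 1) (r := s) (by positivity) hs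
  rw [Real.Gamma_nat_eq_factorial] at this
  simp only [add_sub_cancel_right, Real.rpow_natCast] at this
  rw [this]
  have e : ((N:ℝ) + 1) = ((N + 1 : ℕ) : ℝ) := by push_cast; ring
  rw [e, Real.rpow_natCast, one_div, inv_pow]
  field_simp

theorem C2 (τ : ℝ) (m : ℕ) (h : ℂ → ℂ) (b : ℕ → ℂ) (hh : ExpType τ h)
    (hexp : ∀ z : ℂ, HasSum (fun j : ℕ => b j * z ^ (2 * m + 2 * j)) (h z))
    (s : ℝ) (hs : 0 < s) (hτs : τ < s) :
    ∃ K : ℝ, 0 ≤ K ∧ ∀ j, ‖b j‖ * (2 * m + 2 * j).factorial ≤ K * s ^ (2 * m + 2 * j) := by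
  obtain ⟨C, hC, hb⟩ := hh.2 ((s - τ) / 2) (by linarith)
  set d := (s - τ) / 2 with hd
  have hdpos : 0 < d := by rw [hd]; linarith
  refine ⟨C / d * s, by positivity, fun j => ?_⟩
  set N := 2 * m + 2 * j with hN
  have h1 : ∀ r ∈ Set.Ioi (0:ℝ), ‖b j‖ * (r ^ N * Real.exp (-(s * r))) ≤
      C * (r ^ 0 * Real.exp (-(d * r))) := by
    intro r hr
    have := A2 m h b hexp r (C * Real.exp ((τ + d) * r)) (le_of_lt hr) (by
      intro z hz; rw [← hz]; exact hb z) j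
    calc ‖b j‖ * (r ^ N * Real.exp (-(s * r))) = (‖b j‖ * r ^ N) * Real.exp (-(s * r)) := by ring
      _ ≤ (C * Real.exp ((τ + d) * r)) * Real.exp (-(s * r)) := by gcongr
      _ = C * (r ^ 0 * Real.exp (-(d * r))) := by
        rw [mul_assoc, ← Real.exp_add, pow_zero, one_mul]
        congr 2; rw [hd]; ring
  have h2 := setIntegral_mono_on ((C1a s hs N).const_mul _) ((C1a d hdpos 0).const_mul _)
    measurableSet_Ioi h1
  rw [integral_const_mul, integral_const_mul, C1b s hs, C1b d hdpos] at h2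
  simp only [Nat.factorial_zero, Nat.cast_one, zero_add, pow_one] at h2
  rw [← mul_div_assoc, div_le_iff₀ (by positivity)] at h2
  calc _ ≤ _ := h2
    _ = _ := by rw [pow_succ]; ring

noncomputable def LapT (h : ℂ → ℂ) (p : ℂ) : ℂ :=
  ∫ x in Set.Ioi (0:ℝ), h x * Complex.exp (-(p * x))

noncomputable def BT (m : ℕ) (b : ℕ → ℂ) (p : ℂ) : ℂ :=
  ∑' j : ℕ, b j * (2 * m + 2 * j).factorial / p ^ (2 * m + 2 * j + 1)

theorem C3n (p : ℂ) (x : ℝ) (hx : 0 < x) (hp : 0 ≤ p.re) : ‖Complex.exp (-(p * x))‖ ≤ 1 := by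
  rw [Complex.norm_exp]
  simp only [Complex.neg_re, Complex.mul_re, Complex.ofReal_re, Complex.ofReal_im, mul_zero, sub_zero]
  rw [Real.exp_le_one_iff]
  nlinarith

theorem C3m (h : ℂ → ℂ) (hint : IntegrableOn (fun x : ℝ => h x) (Set.Ioi 0)) (g : ℝ → ℂ)
    (hg : Continuous g) :
    AEStronglyMeasurable (fun x : ℝ => h x * g x) (volume.restrict (Set.Ioi 0)) :=
  hint.1.mul hg.aestronglyMeasurable

theorem C3a (h : ℂ → ℂ) (hint : IntegrableOn (fun x : ℝ => h x) (Set.Ioi 0)) :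
    ContinuousOn (LapT h) {p | 0 ≤ p.re} := by
  unfold LapT
  apply continuousOn_of_dominated (bound := fun x : ℝ => ‖h x‖)
  · intro p _; exact C3m h hint _ (by fun_prop)
  · intro p hp
    filter_upwards [ae_restrict_mem measurableSet_Ioi] with x hx
    rw [norm_mul]
    exact mul_le_of_le_one_right (norm_nonneg _) (C3n p x hx hp)
  · exact hint.norm
  · exact Filter.Eventually.of_forall fun x => by fun_prop

theorem C3b (h : ℂ → ℂ) (hint : IntegrableOn (fun x : ℝ => h x) (Set.Ioi 0)) :
    DifferentiableOn ℂ (LapT h) {p | 0 < p.re} := by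
  intro p hp
  have hp : 0 < p.re := hp
  apply DifferentiableAt.differentiableWithinAt
  unfold LapT
  have hopen : IsOpen {q : ℂ | p.re / 2 < q.re} := isOpen_lt continuous_const Complex.continuous_re
  have := hasDerivAt_integral_of_dominated_loc_of_deriv_le
    (μ := volume.restrict (Set.Ioi (0:ℝ))) (x₀ := p)
    (F := fun (q : ℂ) (x : ℝ) => h x * Complex.exp (-(q * x)))
    (F' := fun (q : ℂ) (x : ℝ) => h x * (Complex.exp (-(q * x)) * (-x)))
    (bound := fun x => ‖h x‖ * (2 / p.re))
    (hopen.mem_nhds (by simp only [Set.mem_ofPred_eq]; linarith))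
    (Filter.Eventually.of_forall fun q => C3m h hint _ (by fun_prop)) ?_
    (C3m h hint (fun x : ℝ => Complex.exp (-(p * x)) * (-x)) (by fun_prop)) ?_ (hint.norm.mul_const _) ?_
  · exact this.2.differentiableAt
  · refine Integrable.mono hint (C3m h hint (fun x : ℝ => Complex.exp (-(p * x))) (by fun_prop)) ?_
    filter_upwards [ae_restrict_mem measurableSet_Ioi] with x hx
    rw [norm_mul]
    exact mul_le_of_le_one_right (norm_nonneg _) (C3n p x hx hp.le)
  · filter_upwards [ae_restrict_mem measurableSet_Ioi] with x hx q hq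
    have hx : 0 < x := hx
    have hq : p.re / 2 < q.re := hq
    rw [norm_mul]
    gcongr
    rw [norm_mul, Complex.norm_exp]
    simp only [Complex.neg_re, Complex.mul_re, Complex.ofReal_re, Complex.ofReal_im, mul_zero,
      sub_zero, norm_neg, Complex.norm_real, Real.norm_eq_abs, abs_of_pos hx]
    have h1 := Real.add_one_le_exp (q.re * x)
    have h2 : 0 < Real.exp (q.re * x) := Real.exp_pos _
    rw [Real.exp_neg, inv_mul_le_iff₀ h2, ← mul_div_assoc, le_div_iff₀ hp]
    nlinarith [mul_pos hx (sub_pos.2 hq)]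
  · refine Filter.Eventually.of_forall fun x q _ => ?_
    have h1 : HasDerivAt (fun q : ℂ => -(q * x)) (-(x:ℂ)) q := by
      have := ((hasDerivAt_id q).mul_const (x:ℂ)).neg
      rw [one_mul] at this
      exact this
    exact (h1.cexp).const_mul _

section BTs
variable (m : ℕ) (b : ℕ → ℂ) (K s : ℝ) (hs : 0 < s) (hK0 : 0 ≤ K)
  (hK : ∀ j, ‖b j‖ * (2 * m + 2 * j).factorial ≤ K * s ^ (2 * m + 2 * j))

theorem C4o (p : ℂ) : BT m b (-p) = - BT m b p := by
  unfold BT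
  rw [← tsum_neg]
  congr 1; ext j
  have : (-p) ^ (2 * m + 2 * j + 1) = - p ^ (2 * m + 2 * j + 1) := by
    rw [Odd.neg_pow]; exact ⟨m + j, by ring⟩
  rw [this, div_neg]

include hs hK0 hK

theorem C4s (t : ℝ) (ht : s < t) :
    Summable (fun j => ‖b j‖ * (2 * m + 2 * j).factorial / t ^ (2 * j)) := by
  have ht0 : 0 < t := hs.trans ht
  have hq : (s / t) ^ 2 < 1 := by
    have : s / t < 1 := (div_lt_one ht0).2 ht
    have h0 : 0 < s / t := by positivity
    nlinarith
  have := (summable_geometric_of_lt_one (by positivity) hq).mul_left (K * s ^ (2 * m))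
  refine Summable.of_nonneg_of_le (fun j => by positivity) (fun j => ?_) this
  rw [div_le_iff₀ (by positivity)]
  refine (hK j).trans (le_of_eq ?_)
  rw [← pow_mul, div_pow]
  field_simp
  ring

omit hs hK0 hK in
theorem C4t (t : ℝ) (ht0 : 0 < t) (p : ℂ) (hp : t ≤ ‖p‖) (j : ℕ) :
    ‖b j * (2 * m + 2 * j).factorial / p ^ (2 * m + 2 * j + 1)‖ ≤
      ‖b j‖ * (2 * m + 2 * j).factorial / t ^ (2 * j) * (1 / ‖p‖ ^ (2 * m + 1)) := by
  have hp0 : 0 < ‖p‖ := ht0.trans_le hp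
  rw [norm_div, norm_mul, norm_pow, Complex.norm_natCast, div_mul_div_comm, mul_one]
  have : ‖p‖ ^ (2 * m + 2 * j + 1) = ‖p‖ ^ (2 * j) * ‖p‖ ^ (2 * m + 1) := by ring
  rw [this]
  gcongr

theorem C4b (t : ℝ) (ht : s < t) : ∃ M : ℝ, 0 ≤ M ∧ ∀ p : ℂ, t ≤ ‖p‖ →
    ‖BT m b p‖ ≤ M * (1 / ‖p‖ ^ (2 * m + 1)) := by
  have hS := C4s m b K s hs hK0 hK t ht
  have ht0 : 0 < t := hs.trans ht
  refine ⟨∑' j, ‖b j‖ * (2 * m + 2 * j).factorial / t ^ (2 * j), tsum_nonneg fun j => by positivity, ?_⟩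
  intro p hp
  unfold BT
  exact tsum_of_norm_bounded (hS.hasSum.mul_right _) (fun j => C4t m b t ht0 p hp j)

theorem C4d (t : ℝ) (ht : s < t) : DifferentiableOn ℂ (BT m b) {p | t < ‖p‖} := by
  have hS := C4s m b K s hs hK0 hK t ht
  have ht0 : 0 < t := hs.trans ht
  unfold BT
  refine Complex.differentiableOn_tsum_of_summable_norm (hS.mul_right (1 / t ^ (2 * m + 1))) ?_
    (isOpen_lt continuous_const continuous_norm) ?_
  · intro j p hp
    have hp : t < ‖p‖ := hp
    have : p ≠ 0 := norm_pos_iff.1 (ht0.trans hp)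
    apply DifferentiableAt.differentiableWithinAt
    exact (differentiableAt_const _).div (by fun_prop) (pow_ne_zero _ this)
  · intro j p hp
    have hp : t < ‖p‖ := hp
    refine (C4t m b t ht0 p hp.le j).trans ?_
    gcongr

theorem C5 (h : ℂ → ℂ) (hexp : ∀ z : ℂ, HasSum (fun j : ℕ => b j * z ^ (2 * m + 2 * j)) (h z))
    (t : ℝ) (ht : s < t) : LapT h t = BT m b t := by
  have hS := C4s m b K s hs hK0 hK t ht
  have ht0 : 0 < t := hs.trans ht
  have e : ∀ (N : ℕ) (x : ℝ), ((x ^ N * Real.exp (-(t * x)) : ℝ) : ℂ)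
      = (x:ℂ) ^ N * Complex.exp (-((t:ℂ) * x)) := by
    intro N x; push_cast; ring
  have key := hasSum_integral_of_summable_integral_norm (μ := volume.restrict (Set.Ioi (0:ℝ)))
    (F := fun (j : ℕ) (x : ℝ) => b j * ((x ^ (2 * m + 2 * j) * Real.exp (-(t * x)) : ℝ) : ℂ))
    (fun j => ((C1a t ht0 _).ofReal (𝕜 := ℂ)).const_mul _) ?_
  · have e1 : LapT h t = ∫ x in Set.Ioi (0:ℝ), ∑' j : ℕ,
        b j * ((x ^ (2 * m + 2 * j) * Real.exp (-(t * x)) : ℝ) : ℂ) := by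
      unfold LapT
      congr 1; ext x
      rw [← ((hexp x).mul_right _).tsum_eq]
      congr 1; ext j
      rw [e]; ring
    rw [e1, ← key.tsum_eq]
    unfold BT
    congr 1; ext j
    rw [integral_const_mul, integral_complex_ofReal, C1b t ht0]
    push_cast; ring
  · refine Summable.congr (hS.mul_right (1 / t ^ (2 * m + 1))) fun j => ?_
    have : ∀ x ∈ Set.Ioi (0:ℝ), ‖b j * ((x ^ (2 * m + 2 * j) * Real.exp (-(t * x)) : ℝ) : ℂ)‖
      = ‖b j‖ * (x ^ (2 * m + 2 * j) * Real.exp (-(t * x))) := by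
      intro x hx
      have hx : 0 < x := hx
      rw [norm_mul, Complex.norm_real, Real.norm_of_nonneg (by positivity)]
    rw [setIntegral_congr_fun measurableSet_Ioi this, integral_const_mul, C1b t ht0]
    field_simp
    ring

theorem C6a (h : ℂ → ℂ) (hexp : ∀ z : ℂ, HasSum (fun j : ℕ => b j * z ^ (2 * m + 2 * j)) (h z))
    (hint : IntegrableOn (fun x : ℝ => h x) (Set.Ioi 0))
    (t : ℝ) (ht : s < t) (p : ℂ) (hp : 0 < p.re) (hpt : t < ‖p‖) : LapT h p = BT m b p := by
  have ht0 : 0 < t := hs.trans ht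
  let U : Set ℂ := {w | Real.log t < w.re} ∩ ({w | -(π/2) < w.im} ∩ {w | w.im < π/2})
  have hUo : IsOpen U := (isOpen_lt continuous_const Complex.continuous_re).inter
    ((isOpen_lt continuous_const Complex.continuous_im).inter
      (isOpen_lt Complex.continuous_im continuous_const))
  have hUc : Convex ℝ U := (convex_halfSpace_re_gt _).inter
    ((convex_halfSpace_im_gt _).inter (convex_halfSpace_im_lt _))
  have hre : ∀ w ∈ U, 0 < (Complex.exp w).re := by
    rintro w ⟨_, h2, h3⟩
    rw [Complex.exp_re]
    exact mul_pos (Real.exp_pos _) (Real.cos_pos_of_mem_Ioo ⟨h2, h3⟩)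
  have hno : ∀ w ∈ U, t < ‖Complex.exp w‖ := by
    rintro w ⟨h1, _⟩
    rw [Complex.norm_exp]
    exact (Real.log_lt_iff_lt_exp ht0).1 h1
  have hf : AnalyticOnNhd ℂ (fun w => LapT h (Complex.exp w)) U :=
    ((C3b h hint).comp Complex.differentiable_exp.differentiableOn hre).analyticOnNhd hUo
  have hg : AnalyticOnNhd ℂ (fun w => BT m b (Complex.exp w)) U :=
    ((C4d m b K s hs hK0 hK t ht).comp Complex.differentiable_exp.differentiableOn hno).analyticOnNhd hUo
  have hpi := Real.pi_pos
  have hmem : ∀ r : ℝ, Real.log t < r → (r : ℂ) ∈ U := by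
    intro r hr
    refine ⟨?_, ?_, ?_⟩ <;> simp [hr, hpi]
  have heq := hf.eqOn_of_preconnected_of_frequently_eq hg hUc.isPreconnected
    (hmem (Real.log t + 1) (by linarith)) (by
      have htend : Filter.Tendsto (fun r : ℝ => (r : ℂ)) (nhdsWithin (Real.log t + 1) (Set.Ioi (Real.log t + 1)))
          (nhdsWithin ((Real.log t + 1 : ℝ) : ℂ) {((Real.log t + 1 : ℝ) : ℂ)}ᶜ) := by
        refine tendsto_nhdsWithin_of_tendsto_nhds_of_eventually_within _
          (Complex.continuous_ofReal.continuousAt.tendsto.mono_left nhdsWithin_le_nhds) ?_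
        filter_upwards [self_mem_nhdsWithin] with r hr
        have hr : Real.log t + 1 < r := hr
        simp only [Set.mem_compl_iff, Set.mem_singleton_iff, Complex.ofReal_inj]
        exact ne_of_gt hr
      refine htend.frequently (Filter.Eventually.frequently ?_)
      filter_upwards [self_mem_nhdsWithin] with r hr
      have hr : Real.log t + 1 < r := hr
      rw [← Complex.ofReal_exp]
      apply C5 m b K s hs hK0 hK h hexp
      refine ht.trans ((Real.log_lt_iff_lt_exp ht0).1 (by linarith)))
  have hp0 : p ≠ 0 := by rintro rfl; simp at hp
  have hlog : Complex.log p ∈ U := by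
    refine ⟨?_, ?_⟩
    · simp only [Set.mem_ofPred_eq, Complex.log_re]
      exact Real.log_lt_log ht0 hpt
    · have := (Complex.abs_arg_lt_pi_div_two_iff (z := p)).2 (Or.inl hp)
      simpa [Complex.log_im] using abs_lt.1 this
  have := heq hlog
  simpa [Complex.exp_log hp0] using this

theorem C6 (h : ℂ → ℂ) (hexp : ∀ z : ℂ, HasSum (fun j : ℕ => b j * z ^ (2 * m + 2 * j)) (h z))
    (hint : IntegrableOn (fun x : ℝ => h x) (Set.Ioi 0))
    (t : ℝ) (ht : s < t) (p : ℂ) (hp : 0 ≤ p.re) (hpt : t < ‖p‖) : LapT h p = BT m b p := by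
  have hopen : IsOpen {p : ℂ | t < ‖p‖} := isOpen_lt continuous_const continuous_norm
  have hB : ContinuousAt (BT m b) p :=
    ((C4d m b K s hs hK0 hK t ht).differentiableAt (hopen.mem_nhds hpt)).continuousAt
  have hL : ContinuousWithinAt (LapT h) {p | 0 ≤ p.re} p := C3a h hint p hp
  have ht1 : Filter.Tendsto (fun e : ℝ => p + e) (nhdsWithin 0 (Set.Ioi 0)) (nhds p) := by
    have : Continuous (fun e : ℝ => p + e) := by fun_prop
    have := this.tendsto 0
    simp only [Complex.ofReal_zero, add_zero] at this
    exact this.mono_left nhdsWithin_le_nhds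
  have ht2 : Filter.Tendsto (fun e : ℝ => p + e) (nhdsWithin 0 (Set.Ioi 0))
      (nhdsWithin p {p | 0 ≤ p.re}) := by
    refine tendsto_nhdsWithin_of_tendsto_nhds_of_eventually_within _ ht1 ?_
    filter_upwards [self_mem_nhdsWithin] with e he
    have he : 0 < e := he
    simp only [Complex.add_re, Complex.ofReal_re]; linarith
  have l1 := hL.tendsto.comp ht2
  have l2 := hB.tendsto.comp ht1
  refine tendsto_nhds_unique_of_eventuallyEq l1 l2 ?_
  filter_upwards [self_mem_nhdsWithin, ht1.eventually (hopen.mem_nhds hpt)] with e he he2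
  have he : 0 < e := he
  exact C6a m b K s hs hK0 hK h hexp hint t ht _ (by
    simp only [Complex.add_re, Complex.ofReal_re]; linarith) he2

end BTs

theorem D1 (l : ℕ) (u : ℂ) : Complex.sinh ((2 * l + 1 : ℕ) * (u + (π/2 : ℝ) * Complex.I))
    = - Complex.sinh ((2 * l + 1 : ℕ) * (u + (-(π/2) : ℝ) * Complex.I)) := by
  set a := ((2 * l + 1 : ℕ) : ℂ) * (u + (-(π/2) : ℝ) * Complex.I) with ha
  have e : ((2 * l + 1 : ℕ) : ℂ) * (u + (π/2 : ℝ) * Complex.I) =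
    a + π * Complex.I + l * (2 * π * Complex.I) := by rw [ha]; push_cast; ring
  have e' : -(a + π * Complex.I + l * (2 * π * Complex.I)) =
    -a + π * Complex.I + (-((l:ℤ) + 1) : ℤ) * (2 * π * Complex.I) := by push_cast; ring
  rw [e, Complex.sinh, e', Complex.sinh, Complex.exp_add, Complex.exp_nat_mul_two_pi_mul_I,
    Complex.exp_add, Complex.exp_pi_mul_I, Complex.exp_add, Complex.exp_int_mul_two_pi_mul_I,
    Complex.exp_add, Complex.exp_pi_mul_I]
  ring

theorem D2 (w : ℂ) : (Complex.sinh w).re = Real.sinh w.re * Real.cos w.im := by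
  rw [Complex.sinh, Real.sinh_eq]
  have e : (Complex.exp w - Complex.exp (-w)) / 2
      = ((1/2 : ℝ) : ℂ) * (Complex.exp w - Complex.exp (-w)) := by
    push_cast; ring
  rw [e, Complex.re_ofReal_mul, Complex.sub_re, Complex.exp_re, Complex.exp_re, Complex.neg_re,
    Complex.neg_im, Real.cos_neg]
  ring

theorem D3 (w : ℂ) : Real.sinh w.re ≤ ‖Complex.sinh w‖ := by
  rw [Complex.sinh, Real.sinh_eq, norm_div, Complex.norm_ofNat]
  have := norm_sub_norm_le (Complex.exp w) (Complex.exp (-w))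
  rw [Complex.norm_exp, Complex.norm_exp, Complex.neg_re] at this
  gcongr

theorem D4 (w : ℂ) (hw : 0 ≤ w.re) : ‖Complex.sinh w‖ ≤ Real.exp w.re := by
  rw [Complex.sinh, norm_div, Complex.norm_ofNat]
  have := norm_sub_le (Complex.exp w) (Complex.exp (-w))
  rw [Complex.norm_exp, Complex.norm_exp, Complex.neg_re] at this
  have h2 : Real.exp (-w.re) ≤ Real.exp w.re := Real.exp_le_exp.2 (by linarith)
  linarith

theorem D5 (u : ℝ) : 1 ≤ ‖Complex.sinh (u + (π/2 : ℝ) * Complex.I)‖ := by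
  rw [Complex.sinh_add, Complex.sinh_mul_I, Complex.cosh_mul_I, ← Complex.ofReal_cos,
    ← Complex.ofReal_sin, Real.cos_pi_div_two, Real.sin_pi_div_two, ← Complex.ofReal_cosh]
  simp only [Complex.ofReal_zero, mul_zero, Complex.ofReal_one, one_mul, zero_add, norm_mul,
    Complex.norm_I, mul_one, Complex.norm_real, Real.norm_eq_abs]
  exact (Real.one_le_cosh u).trans (le_abs_self _)

theorem D6 (h : ℂ → ℂ) (hint : IntegrableOn (fun x : ℝ => h x) (Set.Ioi 0)) (l : ℕ) (lam : ℝ) :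
    (∫ x in Set.Ioi (0 : ℝ), h x * (besselJ (2 * l + 1) (lam * x) : ℂ)) * (2 * π) =
    ∫ v in (-(π/2))..(π/2), 2 * Complex.sinh ((2 * l + 1 : ℕ) * (v * Complex.I))
      * LapT h (lam * Complex.sinh (v * Complex.I)) := by
  have hpi := Real.pi_pos
  rw [← integral_mul_const]
  simp_rw [mul_assoc, A4]
  rw [intervalIntegral.integral_of_le (by linarith)]
  simp_rw [intervalIntegral.integral_of_le (show -(π/2) ≤ π/2 by linarith), ← integral_const_mul]
  rw [integral_integral_swap]
  · congr 1; ext v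
    rw [LapT, ← integral_const_mul, ← integral_const_mul]
    refine integral_congr_ae (Filter.Eventually.of_forall fun x => ?_)
    simp only
    have : (lam * Complex.sinh (v * Complex.I) * x : ℂ)
        = ((lam * x : ℝ) : ℂ) * Complex.sinh (v * Complex.I) := by push_cast; ring
    rw [this]; ring
  · have hI := Integrable.mul_prod (μ := volume.restrict (Set.Ioi (0:ℝ)))
      (ν := volume.restrict (Set.Ioc (-(π/2)) (π/2))) hint
      (integrable_const (2 : ℂ))
    have hc : Continuous (fun q : ℝ × ℝ => 2 * Complex.sinh ((2 * l + 1 : ℕ) * (q.2 * Complex.I)) *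
        Complex.exp (-(((lam * q.1 : ℝ) : ℂ) * Complex.sinh (q.2 * Complex.I)))) := by
      simp only [Complex.sinh]; fun_prop
    refine hI.mono ?_ ?_
    · have := (hint.1.comp_fst (ν := volume.restrict (Set.Ioc (-(π/2)) (π/2)))).mul
        hc.aestronglyMeasurable
      refine this.congr (Filter.Eventually.of_forall fun q => ?_)
      simp only [Function.uncurry, Pi.mul_apply]
    · refine Filter.Eventually.of_forall fun ⟨x, v⟩ => ?_
      simp only [Function.uncurry]
      rw [norm_mul, norm_mul (h x) 2]
      refine mul_le_mul_of_nonneg_left ?_ (norm_nonneg _)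
      have e1 : (-(((lam * x : ℝ) : ℂ) * Complex.sinh (v * Complex.I)))
          = ((-(lam * x * Real.sin v) : ℝ) : ℂ) * Complex.I := by
        rw [Complex.sinh_mul_I]; push_cast; ring
      have e2 : ((2 * l + 1 : ℕ) * (v * Complex.I) : ℂ)
          = (((2 * l + 1 : ℕ) * v : ℝ) : ℂ) * Complex.I := by push_cast; ring
      rw [e1, e2, Complex.sinh_mul_I, ← Complex.ofReal_sin]
      simp only [norm_mul, Complex.norm_exp_ofReal_mul_I, Complex.norm_I, Complex.norm_real,
        Complex.norm_ofNat, mul_one]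
      have := Real.abs_sin_le_one ((2 * l + 1 : ℕ) * v)
      rw [Real.norm_eq_abs]
      linarith

theorem hankel_vanishes_odd_order
    (τ : ℝ) (hτ : 0 ≤ τ) (m l : ℕ) (hl : l < m)
    (h : ℂ → ℂ) (b : ℕ → ℂ) (hb : b 0 ≠ 0)
    (hh : ExpType τ h)
    (hexp : ∀ z : ℂ, HasSum (fun j : ℕ => b j * z ^ (2 * m + 2 * j)) (h z))
    (hreal : ∀ x : ℝ, 0 ≤ x → (h x).im = 0)
    (hint : IntegrableOn (fun x : ℝ => h x) (Set.Ioi 0)) :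
    ∀ lam : ℝ, τ < lam →
      ∫ x in Set.Ioi (0 : ℝ), h x * (besselJ (2 * l + 1) (lam * x) : ℂ) = 0 := by
  intro lam hlam
  have hlam0 : 0 < lam := by linarith
  have hpi := Real.pi_pos
  obtain ⟨s, hτs, hslam⟩ := exists_between hlam
  obtain ⟨t, hst, htlam⟩ := exists_between hslam
  have hs : 0 < s := by linarith
  obtain ⟨K, hK0, hK⟩ := C2 τ m h b hh hexp s hs hτs
  obtain ⟨M, hM0, hM⟩ := C4b m b K s hs hK0 hK t hst
  have hLB := C6 m b K s hs hK0 hK h hexp hint t hst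
  set n : ℕ := 2 * l + 1 with hn
  have hLodd : ∀ p : ℂ, p.re = 0 → t < ‖p‖ → LapT h (-p) = - LapT h p := by
    intro p hp hpt
    rw [hLB p hp.ge hpt, hLB (-p) (by simp [hp]) (by simpa using hpt), C4o]
  let F : ℂ → ℂ := fun w => 2 * Complex.sinh (n * w) * LapT h (lam * Complex.sinh w)
  have hre : ∀ w : ℂ, (lam * Complex.sinh w : ℂ).re = lam * (Real.sinh w.re * Real.cos w.im) := by
    intro w; rw [Complex.re_ofReal_mul, D2]
  have hsd : Differentiable ℂ (fun w => (lam * Complex.sinh w : ℂ)) :=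
    Complex.differentiable_sinh.const_mul _
  have hsn : Differentiable ℂ (fun w : ℂ => 2 * Complex.sinh (n * w)) :=
    (Complex.differentiable_sinh.comp (differentiable_id.const_mul (n : ℂ))).const_mul 2
  have hrect : ∀ R : ℝ, 0 ≤ R → ∫ v in (-(π/2))..(π/2), F (v * Complex.I) =
      ∫ v in (-(π/2))..(π/2), F (R + v * Complex.I) := by
    intro R hR
    have key := Complex.integral_boundary_rect_eq_zero_of_continuousOn_of_differentiableOn F
      (⟨0, -(π/2)⟩ : ℂ) (⟨R, π/2⟩ : ℂ) ?_ ?_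
    · simp only at key
      have htb : ∫ x in (0:ℝ)..R, F (x + (-(π/2) : ℝ) * Complex.I)
          = ∫ x in (0:ℝ)..R, F (x + (π/2 : ℝ) * Complex.I) := by
        congr 1; ext x
        simp only [F]
        have e1 := D1 l x
        have e0 := D1 0 x
        simp only [mul_zero, zero_add, Nat.cast_one, one_mul] at e0
        have h1 := D5 x
        have h2 : LapT h (-(lam * Complex.sinh (x + (π/2 : ℝ) * Complex.I))) = _ :=
          hLodd _ (by rw [hre]; simp) (by
            rw [norm_mul, Complex.norm_real, Real.norm_of_nonneg hlam0.le]
            nlinarith)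
        rw [hn, e1, ← neg_eq_iff_eq_neg.2 e0, mul_neg, h2, ← hn]
        ring
      rw [htb, sub_self, zero_add, sub_eq_zero] at key
      have key := smul_right_injective ℂ Complex.I_ne_zero key
      simp only [Complex.ofReal_zero, zero_add] at key
      exact key.symm
    · rw [Set.uIcc_of_le hR, Set.uIcc_of_le (by simp; linarith)]
      refine hsn.continuous.continuousOn.mul ((C3a h hint).comp hsd.continuous.continuousOn ?_)
      intro w hw
      rw [Complex.mem_reProdIm] at hw
      suffices hg : 0 ≤ (lam * Complex.sinh w : ℂ).re from hg
      rw [hre]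
      exact mul_nonneg hlam0.le (mul_nonneg (Real.sinh_nonneg_iff.2 hw.1.1)
        (Real.cos_nonneg_of_mem_Icc hw.2))
    · rw [min_eq_left hR, max_eq_right hR, min_eq_left (by simp; linarith),
        max_eq_right (by simp; linarith)]
      refine hsn.differentiableOn.mul ((C3b h hint).comp hsd.differentiableOn ?_)
      intro w hw
      rw [Complex.mem_reProdIm] at hw
      suffices hg : 0 < (lam * Complex.sinh w : ℂ).re from hg
      rw [hre]
      exact mul_pos hlam0 (mul_pos (Real.sinh_pos_iff.2 hw.1.1)
        (Real.cos_pos_of_mem_Ioo hw.2))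
  have hbound : ∀ R : ℝ, 1 ≤ R → ‖∫ v in (-(π/2))..(π/2), F (v * Complex.I)‖ ≤
      2 * M * (4 / lam) ^ (2 * m + 1) * Real.exp (-R) * |π/2 - -(π/2)| := by
    intro R hR
    rw [hrect R (by linarith)]
    apply intervalIntegral.norm_integral_le_of_norm_le_const
    intro v hv
    rw [Set.uIoc_of_le (by linarith)] at hv
    set w : ℂ := R + v * Complex.I with hw
    have hwre : w.re = R := by simp [hw]
    have hwim : w.im = v := by simp [hw]
    have h1 : ‖Complex.sinh (n * w)‖ ≤ Real.exp (n * R) := by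
      have e : ((n:ℂ) * w).re = n * R := by
        rw [← hwre, ← Complex.ofReal_natCast, Complex.re_ofReal_mul]
      have := D4 (n * w) (by rw [e]; positivity)
      rwa [e] at this
    have h2 : Real.exp R / 4 ≤ Real.sinh R := by
      rw [Real.sinh_eq]
      have a1 := Real.add_one_le_exp R
      have a2 : Real.exp (-R) ≤ 1 := Real.exp_le_one_iff.2 (by linarith)
      linarith
    have h3 : R ≤ Real.sinh R := Real.self_le_sinh_iff.2 (by linarith)
    have h4 : ‖(lam * Complex.sinh w : ℂ)‖ = lam * ‖Complex.sinh w‖ := by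
      rw [norm_mul, Complex.norm_real, Real.norm_of_nonneg hlam0.le]
    have h5 := D3 w
    rw [hwre] at h5
    have h6 : t < ‖(lam * Complex.sinh w : ℂ)‖ := by rw [h4]; nlinarith
    have h7 : 0 ≤ (lam * Complex.sinh w : ℂ).re := by
      rw [hre, hwre, hwim]
      exact mul_nonneg hlam0.le (mul_nonneg (by linarith)
        (Real.cos_nonneg_of_mem_Icc ⟨hv.1.le, hv.2⟩))
    have h8 : ‖LapT h (lam * Complex.sinh w)‖ ≤ M * (1 / (lam * (Real.exp R / 4)) ^ (2 * m + 1)) := by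
      rw [hLB _ h7 h6]
      refine (hM _ h6.le).trans ?_
      rw [h4]
      gcongr
      exact h2.trans h5
    have h9 : Real.exp (n * R) ≤ Real.exp (-R) * Real.exp R ^ (2 * m + 1) := by
      rw [← Real.exp_nat_mul, ← Real.exp_add, Real.exp_le_exp]
      have : ((n:ℝ) + 1) ≤ ((2 * m + 1 : ℕ) : ℝ) := by exact_mod_cast (by omega)
      nlinarith
    calc ‖F w‖ = 2 * ‖Complex.sinh (n * w)‖ * ‖LapT h (lam * Complex.sinh w)‖ := by
          simp [F]
      _ ≤ 2 * (Real.exp (-R) * Real.exp R ^ (2 * m + 1)) *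
          (M * (1 / (lam * (Real.exp R / 4)) ^ (2 * m + 1))) := by
          gcongr; exact h1.trans h9
      _ = _ := by
          have : (lam * (Real.exp R / 4)) ^ (2 * m + 1)
            = Real.exp R ^ (2 * m + 1) * (lam / 4) ^ (2 * m + 1) := by rw [← mul_pow]; ring
          have e4 : (4 / lam) ^ (2 * m + 1) = ((lam / 4) ^ (2 * m + 1))⁻¹ := by
            rw [← inv_pow, inv_div]
          rw [this, e4]
          have := Real.exp_pos R
          field_simp
  have hzero : ∫ v in (-(π/2))..(π/2), F (v * Complex.I) = 0 := by
    rw [← norm_le_zero_iff]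
    have hlim : Filter.Tendsto (fun R : ℝ =>
        2 * M * (4 / lam) ^ (2 * m + 1) * Real.exp (-R) * |π/2 - -(π/2)|) Filter.atTop (nhds 0) := by
      have := (Real.tendsto_exp_neg_atTop_nhds_zero.const_mul
        (2 * M * (4 / lam) ^ (2 * m + 1))).mul_const |π/2 - -(π/2)|
      simpa using this
    exact ge_of_tendsto hlim ((Filter.eventually_ge_atTop 1).mono hbound)
  have hD := D6 h hint l lam
  have : (∫ x in Set.Ioi (0 : ℝ), h x * (besselJ n (lam * x) : ℂ)) * (2 * π) = 0 := by
    rw [hn, hD]; exact hzero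
  exact (mul_eq_zero.1 this).resolve_right (by
    simp [hpi.ne'])
end

section
/- Let α, β > 0 be real numbers and let g(z) = 1/(Γ(α + βz)·Γ(α − βz)) for z ∈ ℂ, where 1/Γ denotes the entire reciprocal of the complex Gamma function. Then there exist constants C > 0 and R > 0 such that for all z ∈ ℂ with |z| ≥ R, |g(z)| ≤ (C·e^{2α} / (2π·|βz|^{2α−1}))·e^{βπ·|Im(z)|}. In particular, g is an entire function of exponential type βπ. -/
open Real

lemma aux_log (c : ℝ) (u : ℂ) (hu : 0 < ‖u‖) (h : 2 * |c| ≤ ‖u‖) :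
    |Real.log ‖u + c‖ - Real.log ‖u‖ - c * (u⁻¹).re| ≤ c ^ 2 / ‖u‖ ^ 2 ∧ 0 < ‖u + c‖ := by
  have hu0 : u ≠ 0 := norm_pos_iff.mp hu
  have hz : ‖(c : ℂ) / u‖ ≤ 1 / 2 := by
    rw [norm_div, Complex.norm_real, Real.norm_eq_abs, div_le_iff₀ hu]; linarith
  have h1 := Complex.norm_log_one_add_sub_self_le (z := (c : ℂ) / u) (by linarith)
  have hne : (1 : ℂ) + c / u ≠ 0 := by
    intro h0
    have : (c : ℂ) / u = -1 := by linear_combination h0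
    rw [this] at hz; norm_num at hz
  have hf : u + c = u * (1 + c / u) := by field_simp
  have hpos : 0 < ‖(1 : ℂ) + c / u‖ := norm_pos_iff.mpr hne
  refine ⟨?_, by rw [hf, norm_mul]; positivity⟩
  have hre : Real.log ‖u + c‖ - Real.log ‖u‖ - c * (u⁻¹).re
      = (Complex.log (1 + c / u) - c / u).re := by
    rw [hf, norm_mul, Real.log_mul hu.ne' hpos.ne', Complex.sub_re, Complex.log_re, div_eq_mul_inv,
      Complex.re_ofReal_mul]
    ring
  rw [hre]
  refine (Complex.abs_re_le_norm _).trans (h1.trans ?_)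
  have h2 : ‖(c : ℂ) / u‖ ^ 2 = c ^ 2 / ‖u‖ ^ 2 := by
    rw [norm_div, Complex.norm_real, Real.norm_eq_abs, div_pow, sq_abs]
  rw [← h2]
  have h3 : (1 - ‖(c : ℂ) / u‖)⁻¹ ≤ 2 := by
    rw [inv_le_comm₀ (by linarith) (by norm_num)]; linarith
  have : 0 ≤ ‖(c : ℂ) / u‖ ^ 2 := by positivity
  nlinarith

lemma aux_term (a b : ℝ) (u : ℂ) (h : 2 * (|a| + |b| + 1) ≤ ‖u‖) :
    ‖u + b‖ / ‖u + a‖ ≤ (‖u‖ / ‖u + 1‖) ^ (a - b) *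
      Real.exp ((a ^ 2 + b ^ 2 + |a - b|) / ‖u‖ ^ 2) := by
  have ha := abs_nonneg a
  have hb := abs_nonneg b
  have hu : 0 < ‖u‖ := by linarith
  obtain ⟨a1, a2⟩ := aux_log a u hu (by linarith)
  obtain ⟨b1, b2⟩ := aux_log b u hu (by linarith)
  obtain ⟨c1, c2⟩ := aux_log 1 u hu (by rw [abs_one]; linarith)
  rw [Complex.ofReal_one] at c1 c2
  rw [← Real.exp_log (div_pos b2 a2), Real.rpow_def_of_pos (div_pos hu c2), ← Real.exp_add,
    Real.exp_le_exp, Real.log_div b2.ne' a2.ne', Real.log_div hu.ne' c2.ne']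
  have h3 : |(a - b) * (Real.log ‖u + 1‖ - Real.log ‖u‖ - 1 * (u⁻¹).re)|
      ≤ |a - b| * (1 ^ 2 / ‖u‖ ^ 2) := by
    rw [abs_mul]; exact mul_le_mul_of_nonneg_left c1 (abs_nonneg _)
  have e : (a ^ 2 + b ^ 2 + |a - b|) / ‖u‖ ^ 2 =
    a ^ 2 / ‖u‖ ^ 2 + b ^ 2 / ‖u‖ ^ 2 + |a - b| * (1 ^ 2 / ‖u‖ ^ 2) := by ring
  rw [e]
  rw [abs_le] at a1 b1 h3
  linarith [a1.1, b1.2, h3.2, h3.1]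

lemma aux_norm (s : ℂ) (hs : 0 ≤ s.re) (j : ℕ) : ‖s‖ ^ 2 + (j : ℝ) ^ 2 ≤ ‖s + j‖ ^ 2 := by
  rw [Complex.sq_norm, Complex.sq_norm, Complex.normSq_apply, Complex.normSq_apply]
  simp only [Complex.add_re, Complex.add_im, Complex.natCast_re, Complex.natCast_im]
  nlinarith [mul_nonneg hs (Nat.cast_nonneg j : (0 : ℝ) ≤ j)]

lemma aux_prod (a b : ℝ) (s : ℂ) (hs : 0 ≤ s.re) (h : 2 * (|a| + |b| + 1) ≤ ‖s‖) (n : ℕ) :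
    ∏ j ∈ Finset.range n, (‖s + j + b‖ / ‖s + j + a‖) ≤ (‖s‖ / ‖s + n‖) ^ (a - b) *
      Real.exp ((a ^ 2 + b ^ 2 + |a - b|) * ∑ j ∈ Finset.range n, 2 / ((j : ℝ) + 1) ^ 2) := by
  have ha := abs_nonneg a
  have hb := abs_nonneg b
  have hs0 : 0 < ‖s‖ := by linarith
  have hle : ∀ j : ℕ, ‖s‖ ≤ ‖s + j‖ := fun j => by
    have := aux_norm s hs j
    exact le_of_sq_le_sq (by nlinarith [sq_nonneg (j : ℝ)]) (norm_nonneg _)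
  induction n with
  | zero => simp [div_self hs0.ne']
  | succ n ih =>
    rw [Finset.prod_range_succ, Finset.sum_range_succ, mul_add, Real.exp_add]
    have ht := aux_term a b (s + n) (h.trans (hle n))
    have hn := hle n
    have hn1 := hle (n + 1)
    have hsn : s + ((n + 1 : ℕ) : ℂ) = s + n + 1 := by push_cast; ring
    rw [hsn] at hn1 ⊢
    have p1 : 0 < ‖s + n‖ := by linarith
    have p2 : 0 < ‖s + n + 1‖ := by linarith
    have hE : Real.exp ((a ^ 2 + b ^ 2 + |a - b|) / ‖s + n‖ ^ 2) ≤
        Real.exp ((a ^ 2 + b ^ 2 + |a - b|) * (2 / ((n : ℝ) + 1) ^ 2)) := by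
      rw [Real.exp_le_exp, div_eq_mul_inv]
      refine mul_le_mul_of_nonneg_left ?_ (by positivity)
      rw [← one_div, div_le_div_iff₀ (by positivity) (by positivity)]
      have := aux_norm s hs n
      nlinarith [sq_nonneg ((n : ℝ) - 1)]
    have hr : (‖s‖ / ‖s + n + 1‖) ^ (a - b)
        = (‖s‖ / ‖s + n‖) ^ (a - b) * (‖s + n‖ / ‖s + n + 1‖) ^ (a - b) := by
      rw [← Real.mul_rpow (by positivity) (by positivity)]
      congr 1; field_simp
    calc _ ≤ ((‖s‖ / ‖s + n‖) ^ (a - b) *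
          Real.exp ((a ^ 2 + b ^ 2 + |a - b|) * ∑ j ∈ Finset.range n, 2 / ((j : ℝ) + 1) ^ 2)) *
          ((‖s + n‖ / ‖s + n + 1‖) ^ (a - b) *
            Real.exp ((a ^ 2 + b ^ 2 + |a - b|) * (2 / ((n : ℝ) + 1) ^ 2))) := by
          refine mul_le_mul ih (ht.trans ?_) (by positivity) (by positivity)
          exact mul_le_mul_of_nonneg_left hE (by positivity)
      _ = _ := by rw [hr]; ring

lemma aux_ne (c : ℝ) (s : ℂ) (hs : 0 ≤ s.re) (h : 2 * (|c| + 1) ≤ ‖s‖) (m : ℕ) :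
    s + c ≠ -(m : ℂ) := by
  intro h0
  have hsum : s + m = -(c : ℂ) := by linear_combination h0
  have h1 := aux_norm s hs m
  rw [hsum, norm_neg, Complex.norm_real, Real.norm_eq_abs] at h1
  nlinarith [abs_nonneg c, sq_nonneg (m : ℝ)]

lemma aux_seq (a b : ℝ) (s : ℂ) (n : ℕ) (hn : 0 < n) :
    ‖Complex.GammaSeq (s + a) n‖ / ‖Complex.GammaSeq (s + b) n‖ =
      (n : ℝ) ^ (a - b) * ∏ j ∈ Finset.range (n + 1), (‖s + j + b‖ / ‖s + j + a‖) := by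
  have hn' : (0 : ℝ) < n := by exact_mod_cast hn
  have hf : (0 : ℝ) < (n.factorial : ℝ) := by exact_mod_cast n.factorial_pos
  have key : ∀ c : ℝ, ‖Complex.GammaSeq (s + c) n‖ =
      (n : ℝ) ^ (s.re + c) * n.factorial / ∏ j ∈ Finset.range (n + 1), ‖s + j + c‖ := by
    intro c
    rw [Complex.GammaSeq, norm_div, norm_mul, norm_prod, Complex.norm_natCast_cpow_of_pos hn,
      Complex.norm_natCast]
    simp only [Complex.add_re, Complex.ofReal_re]
    congr 1
    refine Finset.prod_congr rfl fun j _ => ?_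
    congr 1; ring
  rw [key, key, Finset.prod_div_distrib]
  have : a - b = (s.re + a) - (s.re + b) := by ring
  rw [this, Real.rpow_sub hn']
  have : (0 : ℝ) < (n : ℝ) ^ (s.re + b) := by positivity
  have h2 : (n.factorial : ℝ) ≠ 0 := hf.ne'
  rw [div_div_div_eq]
  by_cases hA : ∏ j ∈ Finset.range (n + 1), ‖s + j + a‖ = 0
  · simp [hA]
  field_simp

lemma aux_ratio (a b : ℝ) : ∃ K > 0, ∀ s : ℂ, 0 ≤ s.re → 2 * (|a| + |b| + 1) ≤ ‖s‖ →
    ‖Complex.Gamma (s + a)‖ / ‖Complex.Gamma (s + b)‖ ≤ K * ‖s‖ ^ (a - b) := by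
  have hsum : Summable (fun j : ℕ => 2 / ((j : ℝ) + 1) ^ 2) := by
    have h := (summable_nat_add_iff 1).mpr (Real.summable_one_div_nat_pow.mpr (by norm_num : 1 < 2))
    refine (h.mul_left 2).congr fun j => ?_
    push_cast; ring
  refine ⟨Real.exp ((a ^ 2 + b ^ 2 + |a - b|) * ∑' j : ℕ, 2 / ((j : ℝ) + 1) ^ 2),
    Real.exp_pos _, fun s hs h => ?_⟩
  set K := Real.exp ((a ^ 2 + b ^ 2 + |a - b|) * ∑' j : ℕ, 2 / ((j : ℝ) + 1) ^ 2) with hK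
  have ha := abs_nonneg a
  have hb := abs_nonneg b
  have hs0 : 0 < ‖s‖ := by linarith
  have hB : ‖Complex.Gamma (s + b)‖ ≠ 0 := by
    rw [norm_ne_zero_iff]
    exact Complex.Gamma_ne_zero (aux_ne b s hs (by linarith))
  have hlim := ((Complex.GammaSeq_tendsto_Gamma (s + a)).norm).div
    ((Complex.GammaSeq_tendsto_Gamma (s + b)).norm) hB
  have hq : Filter.Tendsto (fun n : ℕ => ‖s + ((n + 1 : ℕ) : ℂ)‖ / n) Filter.atTop (nhds 1) := by
    have h1 : Filter.Tendsto (fun n : ℕ => (s + 1) * ((n : ℂ))⁻¹ + 1) Filter.atTop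
        (nhds ((s + 1) * 0 + 1)) :=
      (tendsto_inv_atTop_nhds_zero_nat.const_mul _).add_const _
    have h2 := h1.norm
    rw [mul_zero, zero_add, norm_one] at h2
    refine h2.congr' ?_
    filter_upwards [Filter.eventually_gt_atTop 0] with n hn
    have hn' : (n : ℂ) ≠ 0 := by exact_mod_cast hn.ne'
    rw [← Complex.norm_natCast n, ← norm_div]
    congr 1
    push_cast
    field_simp
    ring
  have hq2 : Filter.Tendsto (fun n : ℕ =>
      (K * ‖s‖ ^ (a - b)) * ((‖s + ((n + 1 : ℕ) : ℂ)‖ / n)⁻¹) ^ (a - b)) Filter.atTop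
      (nhds ((K * ‖s‖ ^ (a - b)) * (1⁻¹) ^ (a - b))) :=
    ((hq.inv₀ one_ne_zero).rpow_const (Or.inl (by norm_num))).const_mul _
  rw [inv_one, Real.one_rpow, mul_one] at hq2
  refine le_of_tendsto_of_tendsto hlim hq2 ?_
  filter_upwards [Filter.eventually_gt_atTop 0] with n hn
  have hn' : (0 : ℝ) < n := by exact_mod_cast hn
  simp only [Pi.div_apply]
  rw [aux_seq a b s n hn]
  have hp := aux_prod a b s hs h (n + 1)
  have hp2 : Real.exp ((a ^ 2 + b ^ 2 + |a - b|) *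
      ∑ j ∈ Finset.range (n + 1), 2 / ((j : ℝ) + 1) ^ 2) ≤ K := by
    rw [hK, Real.exp_le_exp]
    refine mul_le_mul_of_nonneg_left ?_ (by positivity)
    exact hsum.sum_le_tsum _ (fun j _ => by positivity)
  calc _ ≤ (n : ℝ) ^ (a - b) * ((‖s‖ / ‖s + ((n + 1 : ℕ) : ℂ)‖) ^ (a - b) * K) := by
        refine mul_le_mul_of_nonneg_left (hp.trans ?_) (by positivity)
        exact mul_le_mul_of_nonneg_left hp2 (by positivity)
    _ = _ := by
        rw [inv_div, div_eq_mul_inv, div_eq_mul_inv, Real.mul_rpow (by positivity) (by positivity),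
          Real.mul_rpow (by positivity) (by positivity)]
        ring

lemma aux_sin (z : ℂ) : ‖Complex.sin z‖ ≤ Real.exp |z.im| := by
  rw [Complex.sin]
  have h1 : ‖Complex.exp (-z * Complex.I)‖ ≤ Real.exp |z.im| := by
    rw [Complex.norm_exp, Real.exp_le_exp]
    simpa using le_abs_self z.im
  have h2 : ‖Complex.exp (z * Complex.I)‖ ≤ Real.exp |z.im| := by
    rw [Complex.norm_exp, Real.exp_le_exp]
    simpa using neg_le_abs z.im
  rw [norm_div, norm_mul, Complex.norm_I, mul_one, Complex.norm_ofNat, div_le_iff₀ (by norm_num)]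
  exact (norm_sub_le _ _).trans (by linarith)

lemma aux_half (α : ℝ) : ∃ K > 0, ∃ R > 0, ∀ w : ℂ, 0 ≤ w.re → R ≤ ‖w‖ →
    ‖(Complex.Gamma (α + w))⁻¹ * (Complex.Gamma (α - w))⁻¹‖ ≤
      K / π * ‖w‖ ^ (1 - 2 * α) * Real.exp (π * |w.im|) := by
  obtain ⟨K, hK, H⟩ := aux_ratio (1 - α) α
  refine ⟨K, hK, 2 * (|1 - α| + |α| + 1), by positivity, fun w hw hR => ?_⟩
  have h1 := H w hw hR
  have hG : Complex.Gamma (w + ((1 - α : ℝ) : ℂ)) ≠ 0 :=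
    Complex.Gamma_ne_zero (aux_ne _ w hw (by linarith [abs_nonneg α]))
  have hrefl := Complex.Gamma_mul_Gamma_one_sub (α - w)
  have e1 : (1 : ℂ) - (α - w) = w + ((1 - α : ℝ) : ℂ) := by push_cast; ring
  rw [e1] at hrefl
  have h2 : (Complex.Gamma (α - w))⁻¹ =
      Complex.Gamma (w + ((1 - α : ℝ) : ℂ)) * (Complex.sin (π * (α - w)) / π) := by
    rw [← inv_div, ← hrefl, mul_inv, mul_comm, mul_assoc, inv_mul_cancel₀ hG, mul_one]
  have h3 := aux_sin (π * (α - w))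
  have e3 : ((π : ℂ) * (α - w)).im = -(π * w.im) := by simp
  rw [e3, abs_neg, abs_mul, abs_of_pos Real.pi_pos] at h3
  have e4 : (1 - α) - α = 1 - 2 * α := by ring
  rw [e4] at h1
  rw [h2, norm_mul, norm_mul, norm_div, norm_inv, Complex.norm_real, Real.norm_of_nonneg pi_pos.le,
    add_comm (α : ℂ) w]
  calc _ = (‖Complex.Gamma (w + ((1 - α : ℝ) : ℂ))‖ / ‖Complex.Gamma (w + α)‖) *
        ‖Complex.sin (π * (α - w))‖ / π := by ring
    _ ≤ (K * ‖w‖ ^ (1 - 2 * α)) * Real.exp (π * |w.im|) / π := by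
        gcongr
    _ = _ := by ring

lemma aux_full (α : ℝ) : ∃ K > 0, ∃ R > 0, ∀ w : ℂ, R ≤ ‖w‖ →
    ‖(Complex.Gamma (α + w))⁻¹ * (Complex.Gamma (α - w))⁻¹‖ ≤
      K / π * ‖w‖ ^ (1 - 2 * α) * Real.exp (π * |w.im|) := by
  obtain ⟨K, hK, R, hR, H⟩ := aux_half α
  refine ⟨K, hK, R, hR, fun w hw => ?_⟩
  rcases le_total 0 w.re with h | h
  · exact H w h hw
  · have := H (-w) (by simpa using h) (by simpa using hw)
    rw [norm_neg, Complex.neg_im, abs_neg, sub_neg_eq_add, ← sub_eq_add_neg, mul_comm] at this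
    exact this

theorem recip_gamma_product_exp_type (α β : ℝ) (hα : 0 < α) (hβ : 0 < β) :
    (∃ C > 0, ∃ R > 0, ∀ z : ℂ, R ≤ ‖z‖ →
      ‖(Complex.Gamma (α + β * z))⁻¹ * (Complex.Gamma (α - β * z))⁻¹‖
        ≤ C * Real.exp (2 * α) / (2 * π * ‖(β : ℂ) * z‖ ^ (2 * α - 1))
            * Real.exp (β * π * |z.im|)) ∧
    ExpType (β * π)
      (fun z : ℂ => (Complex.Gamma (α + β * z))⁻¹ * (Complex.Gamma (α - β * z))⁻¹) := by
  obtain ⟨K, hK, R, hR, H⟩ := aux_full α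
  have hnorm : ∀ z : ℂ, ‖(β : ℂ) * z‖ = β * ‖z‖ := fun z => by
    rw [norm_mul, Complex.norm_real, Real.norm_of_nonneg hβ.le]
  have H2 : ∀ z : ℂ, R / β ≤ ‖z‖ →
      ‖(Complex.Gamma (α + β * z))⁻¹ * (Complex.Gamma (α - β * z))⁻¹‖ ≤
      K / π * ‖(β : ℂ) * z‖ ^ (1 - 2 * α) * Real.exp (β * π * |z.im|) := by
    intro z hz
    have := H (β * z) (by rw [hnorm]; rwa [div_le_iff₀' hβ] at hz)
    have e : π * |((β : ℂ) * z).im| = β * π * |z.im| := by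
      rw [Complex.im_ofReal_mul, abs_mul, abs_of_pos hβ]; ring
    rwa [e] at this
  have hdiff : Differentiable ℂ
      (fun z : ℂ => (Complex.Gamma (α + β * z))⁻¹ * (Complex.Gamma (α - β * z))⁻¹) := by
    have h := Complex.differentiable_one_div_Gamma
    exact (h.comp (f := fun z : ℂ => (α : ℂ) + β * z) (by fun_prop)).mul
      (h.comp (f := fun z : ℂ => (α : ℂ) - β * z) (by fun_prop))
  refine ⟨⟨2 * K / Real.exp (2 * α), by positivity, R / β, by positivity, fun z hz => ?_⟩,
    hdiff, fun ε hε => ?_⟩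
  · refine (H2 z hz).trans (le_of_eq ?_)
    have e : (1 - 2 * α) = -(2 * α - 1) := by ring
    rw [e, Real.rpow_neg (norm_nonneg _), div_mul_cancel₀ _ (Real.exp_pos _).ne']
    congr 1
    rw [← div_eq_mul_inv, div_div, mul_assoc, mul_div_mul_left _ _ two_ne_zero]
  · have ho := (isLittleO_rpow_exp_pos_mul_atTop (1 - 2 * α) (div_pos hε hβ)).bound one_pos
    obtain ⟨X, hX⟩ := Filter.eventually_atTop.mp ho
    set R' := max (R / β) (X / β) with hR'
    obtain ⟨M, hM⟩ := (isCompact_closedBall (0 : ℂ) R').exists_bound_of_continuousOn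
      hdiff.continuous.continuousOn
    refine ⟨max M (K / π), lt_max_of_lt_right (by positivity), fun z => ?_⟩
    rcases le_total ‖z‖ R' with hz | hz
    · refine (hM z (by simpa using hz)).trans ((le_max_left _ (K / π)).trans ?_)
      refine le_mul_of_one_le_right ?_ (Real.one_le_exp (by positivity))
      exact (by positivity : (0 : ℝ) ≤ K / π).trans (le_max_right _ _)
    · refine (H2 z ((le_max_left _ _).trans hz)).trans ?_
      have h1 := hX (β * ‖z‖) (by
        have := (le_max_right _ _).trans hz
        rwa [div_le_iff₀' hβ] at this)
      rw [one_mul, Real.norm_of_nonneg (by positivity), Real.norm_of_nonneg (by positivity)] at h1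
      have e : ε / β * (β * ‖z‖) = ε * ‖z‖ := by field_simp
      rw [e] at h1
      rw [hnorm, add_mul, Real.exp_add, mul_assoc, mul_comm (Real.exp (β * π * ‖z‖))]
      have h2 : Real.exp (β * π * |z.im|) ≤ Real.exp (β * π * ‖z‖) := by
        rw [Real.exp_le_exp]
        exact mul_le_mul_of_nonneg_left (Complex.abs_im_le_norm z) (by positivity)
      exact mul_le_mul (le_max_right _ _) (mul_le_mul h1 h2 (by positivity) (by positivity))
        (by positivity) ((by positivity : (0 : ℝ) ≤ K / π).trans (le_max_right _ _))
end

section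
/- The integral ∫_0^∞ J_1(πx) / (Γ(1+x)·Γ(1−x)) dx equals 1/π, where 1/(Γ(1+x)·Γ(1−x)) denotes the entire even function of x given by the product of reciprocal Gamma functions (equivalently, sin(πx)/(πx)). -/
open MeasureTheory Real

lemma aux_summable (a : ℕ → ℝ) (ha : ∀ k, |a k| ≤ 1 / (Nat.factorial k : ℝ)) (y : ℝ) :
    Summable (fun k => a k * y ^ k) := by
  refine Summable.of_norm_bounded (Real.summable_pow_div_factorial |y|) ?_
  intro k
  rw [Real.norm_eq_abs, abs_mul, abs_pow]
  calc |a k| * |y| ^ k ≤ 1 / (Nat.factorial k : ℝ) * |y| ^ k := by gcongr; exact ha k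
    _ = _ := by ring

lemma aux_deriv (a b : ℕ → ℝ) (ha : ∀ k, |a k| ≤ 1 / (Nat.factorial k : ℝ))
    (hab : ∀ k, b k = (k + 1) * a (k + 1)) (y : ℝ) :
    HasDerivAt (fun y : ℝ => ∑' k, a k * y ^ k) (∑' k, b k * y ^ k) y := by
  set R := |y| + 1 with hR
  have hu : Summable (fun k : ℕ => (k : ℝ) / (Nat.factorial k : ℝ) * R ^ (k - 1)) := by
    rw [← summable_nat_add_iff 1]
    refine (Real.summable_pow_div_factorial R).congr ?_
    intro k
    rw [Nat.factorial_succ]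
    have := Nat.factorial_pos k
    push_cast
    field_simp
  have hb : ∀ k : ℕ, ∀ z ∈ Metric.ball (0 : ℝ) R,
      ‖a k * (k * z ^ (k - 1))‖ ≤ (k : ℝ) / (Nat.factorial k : ℝ) * R ^ (k - 1) := by
    intro k z hz
    rw [mem_ball_zero_iff, Real.norm_eq_abs] at hz
    rw [Real.norm_eq_abs, abs_mul, abs_mul, abs_pow, Nat.abs_cast]
    calc |a k| * (k * |z| ^ (k - 1)) ≤ 1 / (Nat.factorial k : ℝ) * (k * R ^ (k - 1)) := by
          gcongr
          exact ha k
      _ = _ := by ring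
  have hy : y ∈ Metric.ball (0 : ℝ) R := by
    rw [mem_ball_zero_iff, Real.norm_eq_abs]; linarith
  have key := hasDerivAt_tsum_of_isPreconnected (g := fun k (z : ℝ) => a k * z ^ k)
    (g' := fun k (z : ℝ) => a k * (k * z ^ (k - 1))) hu Metric.isOpen_ball
    (convex_ball (0 : ℝ) R).isPreconnected
    (fun k z _ => (hasDerivAt_pow k z).const_mul (a k)) hb hy (aux_summable a ha y) hy
  refine key.congr_deriv ?_
  have hs : Summable (fun k : ℕ => a k * (k * y ^ (k - 1))) :=
    Summable.of_norm_bounded hu (fun k => hb k y hy)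
  rw [hs.tsum_eq_zero_add]
  simp only [Nat.cast_zero, zero_mul, mul_zero, zero_add]
  refine tsum_congr fun k => ?_
  rw [hab, Nat.add_sub_cancel]
  push_cast
  ring

noncomputable def cE0 (k : ℕ) : ℝ := (-1) ^ k / (Nat.factorial k * Nat.factorial k)
noncomputable def cE1 (k : ℕ) : ℝ := (-1) ^ k / (Nat.factorial k * Nat.factorial (k + 1))
noncomputable def cP : ℕ → ℝ
  | 0 => 0
  | k + 1 => cE1 k
noncomputable def E0 (y : ℝ) : ℝ := ∑' k, cE0 k * y ^ k
noncomputable def E1 (y : ℝ) : ℝ := ∑' k, cE1 k * y ^ k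

lemma fac_ge (k : ℕ) : (1 : ℝ) ≤ (Nat.factorial k : ℝ) := by
  exact_mod_cast Nat.factorial_pos k

lemma cE0_le (k : ℕ) : |cE0 k| ≤ 1 / (Nat.factorial k : ℝ) := by
  have := fac_ge k
  rw [cE0, abs_div, abs_pow, abs_neg, abs_one, one_pow, abs_of_pos (by positivity)]
  apply one_div_le_one_div_of_le (by positivity)
  nlinarith

lemma cE1_le' (k : ℕ) : |cE1 k| ≤ 1 / (Nat.factorial (k + 1) : ℝ) := by
  have := fac_ge k
  have := fac_ge (k + 1)
  rw [cE1, abs_div, abs_pow, abs_neg, abs_one, one_pow, abs_of_pos (by positivity)]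
  apply one_div_le_one_div_of_le (by positivity)
  nlinarith

lemma cE1_le (k : ℕ) : |cE1 k| ≤ 1 / (Nat.factorial k : ℝ) := by
  refine (cE1_le' k).trans ?_
  apply one_div_le_one_div_of_le
  · have := fac_ge k
    linarith
  · exact_mod_cast Nat.factorial_le (Nat.le_succ k)

lemma cP_le (k : ℕ) : |cP k| ≤ 1 / (Nat.factorial k : ℝ) := by
  cases k with
  | zero => simp [cP]
  | succ k => exact cE1_le' k

lemma E0_deriv (y : ℝ) : HasDerivAt E0 (- E1 y) y := by
  have h := aux_deriv cE0 (fun k => - cE1 k) cE0_le ?_ y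
  · refine HasDerivAt.congr_deriv (f := E0) h ?_
    simp only [neg_mul, tsum_neg, E1]
  · intro k
    have := Nat.factorial_pos k
    simp only [cE0, cE1, Nat.factorial_succ]
    push_cast
    field_simp
    ring

lemma E1_cont : Continuous E1 := by
  rw [continuous_iff_continuousAt]
  intro y
  exact (aux_deriv cE1 _ cE1_le (fun k => rfl) y).continuousAt

lemma yE1_deriv (y : ℝ) : HasDerivAt (fun y => y * E1 y) (E0 y) y := by
  have h := aux_deriv cP cE0 cP_le ?_ y
  · refine HasDerivAt.congr_of_eventuallyEq (f' := E0 y) h (Filter.Eventually.of_forall ?_)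
    intro z
    change z * E1 z = ∑' k, cP k * z ^ k
    rw [(aux_summable cP cP_le z).tsum_eq_zero_add]
    simp only [cP, zero_mul, zero_add, E1]
    rw [← tsum_mul_left]
    refine tsum_congr fun k => ?_
    ring
  · intro k
    have := Nat.factorial_pos k
    simp only [cE0, cE1, cP, Nat.factorial_succ]
    push_cast
    field_simp

noncomputable def B0 (x : ℝ) : ℝ := E0 (x ^ 2 / 4)
noncomputable def B1_s13 (x : ℝ) : ℝ := x / 2 * E1 (x ^ 2 / 4)

lemma besselJ_one (x : ℝ) : besselJ 1 x = B1_s13 x := by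
  rw [besselJ, B1_s13, E1, ← tsum_mul_left]
  refine tsum_congr fun k => ?_
  rw [cE1, pow_add, pow_mul, add_comm 1 k]
  have : (x / 2) ^ 2 = x ^ 2 / 4 := by ring
  rw [this]
  ring

lemma sq4_deriv (x : ℝ) : HasDerivAt (fun x : ℝ => x ^ 2 / 4) (x / 2) x := by
  refine ((hasDerivAt_pow 2 x).div_const 4).congr_deriv ?_
  norm_num
  ring

lemma B0_deriv (x : ℝ) : HasDerivAt B0 (- B1_s13 x) x := by
  have h := (E0_deriv (x ^ 2 / 4)).comp x (sq4_deriv x)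
  refine HasDerivAt.congr_deriv (f := B0) h ?_
  rw [B1_s13]; ring

lemma B1_deriv (x : ℝ) (hx : 0 < x) : HasDerivAt B1_s13 (B0 x - B1_s13 x / x) x := by
  have h := (yE1_deriv (x ^ 2 / 4)).comp x (sq4_deriv x)
  have h2 := (h.mul_const 2).div (hasDerivAt_id x) hx.ne'
  have h3 : HasDerivAt B1_s13 _ x := h2.congr_of_eventuallyEq (by
    filter_upwards [lt_mem_nhds hx] with z hz
    simp only [B1_s13, Function.comp, id, Pi.div_apply]
    field_simp
    ring)
  refine h3.congr_deriv ?_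
  simp only [B0, B1_s13, Function.comp, id]
  field_simp
  ring

lemma B1_cont : Continuous B1_s13 := by
  unfold B1_s13
  have := E1_cont
  fun_prop

lemma B0_cont : Continuous B0 :=
  continuous_iff_continuousAt.2 fun x => (B0_deriv x).continuousAt

noncomputable def GG (t : ℝ) : ℝ := t * (B0 t ^ 2 + B1_s13 t ^ 2) - B0 t * B1_s13 t

lemma GG_deriv (t : ℝ) (ht : 0 < t) : HasDerivAt GG (B0 t * B1_s13 t / t) t := by
  have h0 := B0_deriv t
  have h1 := B1_deriv t ht
  have h := ((hasDerivAt_id t).mul ((h0.pow 2).add (h1.pow 2))).sub (h0.mul h1)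
  refine HasDerivAt.congr_deriv (f := GG) h ?_
  simp
  field_simp
  ring

lemma HH_deriv (t : ℝ) (ht : 0 < t) : HasDerivAt (fun t => GG t * exp (1 / t))
    (exp (1 / t) * (B0 t * B1_s13 t / t - GG t / t ^ 2)) t := by
  have h2 : HasDerivAt (fun t : ℝ => 1 / t) (-(t ^ 2)⁻¹) t := by
    simpa using hasDerivAt_inv ht.ne'
  have h := (GG_deriv t ht).mul h2.exp
  refine HasDerivAt.congr_deriv h ?_
  field_simp
  ring

lemma HH_anti : AntitoneOn (fun t => GG t * exp (1 / t)) (Set.Ici 1) := by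
  have hp : ∀ t : ℝ, t ∈ Set.Ici (1 : ℝ) → 0 < t := fun t ht => lt_of_lt_of_le one_pos ht
  apply antitoneOn_of_deriv_nonpos (convex_Ici 1)
  · intro t ht
    exact (HH_deriv t (hp t ht)).continuousAt.continuousWithinAt
  · intro t ht
    exact (HH_deriv t (hp t (interior_subset ht))).differentiableAt.differentiableWithinAt
  · intro t ht
    have h1 : 1 ≤ t := interior_subset ht
    have h0 := hp t h1
    rw [(HH_deriv t h0).deriv]
    apply mul_nonpos_of_nonneg_of_nonpos (exp_pos _).le
    have : B0 t * B1_s13 t / t - GG t / t ^ 2 = ((t + 1) * (B0 t * B1_s13 t)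
        - t * (B0 t ^ 2 + B1_s13 t ^ 2)) / t ^ 2 := by
      rw [GG]; field_simp; ring
    rw [this]
    apply div_nonpos_of_nonpos_of_nonneg _ (by positivity)
    nlinarith [mul_nonneg (by linarith : 0 ≤ t + 1) (sq_nonneg (B0 t - B1_s13 t)),
      mul_nonneg (by linarith : 0 ≤ t - 1) (add_nonneg (sq_nonneg (B0 t)) (sq_nonneg (B1_s13 t)))]

lemma decay : ∃ C : ℝ, 0 ≤ C ∧ ∀ t : ℝ, 1 ≤ t → B0 t ^ 2 + B1_s13 t ^ 2 ≤ C / t := by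
  have hlow : ∀ t : ℝ, 1 ≤ t → t * (B0 t ^ 2 + B1_s13 t ^ 2) ≤ 2 * GG t := by
    intro t ht
    rw [GG]
    nlinarith [sq_nonneg (B0 t - B1_s13 t),
      mul_nonneg (by linarith : 0 ≤ t - 1) (add_nonneg (sq_nonneg (B0 t)) (sq_nonneg (B1_s13 t)))]
  have hnn : ∀ t : ℝ, 1 ≤ t → 0 ≤ GG t := by
    intro t ht
    have h1 := hlow t ht
    have : 0 ≤ t * (B0 t ^ 2 + B1_s13 t ^ 2) := by positivity
    linarith
  refine ⟨2 * (GG 1 * exp (1 / 1)), by have := hnn 1 le_rfl; positivity, fun t ht => ?_⟩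
  have h0 : 0 < t := by linarith
  rw [le_div_iff₀ h0]
  have h1 := HH_anti (Set.mem_Ici.2 le_rfl) (Set.mem_Ici.2 ht) ht
  have h2 : GG t ≤ GG t * exp (1 / t) :=
    le_mul_of_one_le_right (hnn t ht) (one_le_exp (by positivity))
  have h3 := hlow t ht
  simp only at h1
  linarith

lemma decay' : ∃ C : ℝ, 0 ≤ C ∧ ∀ t : ℝ, 1 ≤ t →
    |B0 t| ≤ C * t ^ (-(1 / 2) : ℝ) ∧ |B1_s13 t| ≤ C * t ^ (-(1 / 2) : ℝ) := by
  obtain ⟨C, hC, h⟩ := decay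
  refine ⟨√C, sqrt_nonneg _, fun t ht => ?_⟩
  have h0 : 0 < t := by linarith
  have e : √C * t ^ (-(1 / 2) : ℝ) = √(C / t) := by
    rw [sqrt_div hC, rpow_neg h0.le, ← sqrt_eq_rpow]; rfl
  rw [e]
  have := h t ht
  constructor
  · apply abs_le_sqrt; nlinarith [sq_nonneg (B1_s13 t)]
  · apply abs_le_sqrt; nlinarith [sq_nonneg (B0 t)]

noncomputable def gg (t : ℝ) : ℝ := E1 (t ^ 2 / 4) / 2 * sin t

lemma gg_cont : Continuous gg := by
  unfold gg
  have := E1_cont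
  fun_prop

lemma gg_eq (t : ℝ) (ht : 0 < t) : gg t = B1_s13 t * sin t / t := by
  rw [gg, B1_s13]; field_simp

lemma gg_int : IntegrableOn gg (Set.Ioi 0) := by
  rw [← Set.Ioc_union_Ioi_eq_Ioi (zero_le_one' ℝ)]
  refine IntegrableOn.union ?_ ?_
  · exact (gg_cont.integrableOn_Icc).mono_set Set.Ioc_subset_Icc_self
  · obtain ⟨C, hC, h⟩ := decay'
    have hi : IntegrableOn (fun t : ℝ => C * t ^ (-(3 / 2) : ℝ)) (Set.Ioi 1) :=
      (integrableOn_Ioi_rpow_of_lt (by norm_num) one_pos).const_mul C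
    refine Integrable.mono' hi gg_cont.aestronglyMeasurable ?_
    filter_upwards [ae_restrict_mem measurableSet_Ioi] with t ht
    have h1 : 1 < t := ht
    have h0 : 0 < t := by linarith
    rw [gg_eq t h0, Real.norm_eq_abs, abs_div, abs_mul, abs_of_pos h0]
    have e : t ^ (-(3 / 2) : ℝ) = t ^ (-(1 / 2) : ℝ) / t := by
      rw [← rpow_sub_one h0.ne']; norm_num
    rw [e, ← mul_div_assoc]
    apply div_le_div_of_nonneg_right _ h0.le
    calc |B1_s13 t| * |sin t| ≤ |B1_s13 t| * 1 := by gcongr; exact abs_sin_le_one t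
      _ ≤ _ := by rw [mul_one]; exact (h t h1.le).2

lemma B_tendsto : Filter.Tendsto (fun t => -(B0 t * cos t + B1_s13 t * sin t)) Filter.atTop
    (nhds 0) := by
  obtain ⟨C, hC, h⟩ := decay'
  have ht : Filter.Tendsto (fun t : ℝ => 2 * (C * t ^ (-(1 / 2) : ℝ))) Filter.atTop (nhds 0) := by
    have := ((tendsto_rpow_neg_atTop (by norm_num : (0 : ℝ) < 1 / 2)).const_mul C).const_mul 2
    simpa using this
  refine squeeze_zero_norm' ?_ ht
  filter_upwards [Filter.eventually_ge_atTop 1] with t h1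
  rw [Real.norm_eq_abs, abs_neg]
  obtain ⟨ha, hb⟩ := h t h1
  calc _ ≤ |B0 t * cos t| + |B1_s13 t * sin t| := abs_add_le _ _
    _ = |B0 t| * |cos t| + |B1_s13 t| * |sin t| := by rw [abs_mul, abs_mul]
    _ ≤ |B0 t| * 1 + |B1_s13 t| * 1 := by
      gcongr
      · exact abs_cos_le_one t
      · exact abs_sin_le_one t
    _ ≤ _ := by linarith

lemma gg_integral : ∫ t in Set.Ioi (0 : ℝ), gg t = 1 := by
  have h := integral_Ioi_of_hasDerivAt_of_tendsto (a := (0 : ℝ))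
    (f := fun t => -(B0 t * cos t + B1_s13 t * sin t)) (f' := gg) (m := 0) ?_ ?_ gg_int B_tendsto
  · rw [h]
    simp [B0, E0, B1_s13]
    rw [tsum_eq_single 0 (by intro k hk; simp [hk])]
    simp [cE0]
  · have := B0_cont
    have := B1_cont
    exact Continuous.continuousWithinAt (by fun_prop)
  · intro t ht
    have h0 : 0 < t := ht
    have h := (((B0_deriv t).mul (hasDerivAt_cos t)).add
      ((B1_deriv t h0).mul (hasDerivAt_sin t))).neg
    refine HasDerivAt.congr_deriv h ?_
    rw [gg_eq t h0]
    ring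

theorem hankel_gamma_special_case_J1 :
    ∫ x in Set.Ioi (0 : ℝ),
        besselJ 1 (π * x) * (Real.Gamma (1 + x) * Real.Gamma (1 - x))⁻¹ = 1 / π := by
  have h := integral_comp_mul_left_Ioi gg 0 pi_pos
  rw [mul_zero, gg_integral] at h
  rw [show (1 : ℝ) / π = π⁻¹ • (1 : ℝ) by simp, ← h]
  refine setIntegral_congr_fun measurableSet_Ioi fun x hx => ?_
  have h0 : 0 < x := hx
  change besselJ 1 (π * x) * (Real.Gamma (1 + x) * Real.Gamma (1 - x))⁻¹ = gg (π * x)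
  rw [besselJ_one, gg_eq _ (mul_pos pi_pos h0), add_comm 1 x, Real.Gamma_add_one h0.ne', mul_assoc,
    Real.Gamma_mul_Gamma_one_sub, mul_inv, inv_div]
  field_simp
end

section
/- The integral ∫_0^∞ x·J_2(πx) / (Γ(2+x)·Γ(2−x)) dx equals 2/π², where 1/(Γ(2+x)·Γ(2−x)) denotes the entire even function of x given by the product of reciprocal Gamma functions. -/
open MeasureTheory Real

theorem hasSum_congr_aux {f g : ℕ → ℂ} {a : ℂ} (h : ∀ k, f k = g k) : HasSum g a ↔ HasSum f a := by
  rw [funext h]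

theorem aux_circ (θ : ℝ) : circleMap 0 1 θ = Complex.exp (θ * Complex.I) := by
  simp [circleMap]

theorem aux_sin_s14 (θ : ℝ) : circleMap 0 1 θ - (circleMap 0 1 θ)⁻¹ = 2 * Complex.I * (Real.sin θ : ℝ) := by
  rw [aux_circ, ← Complex.exp_neg, Complex.ofReal_sin, Complex.sin]
  ring_nf
  simp
  ring

theorem bessel_hasSum (z : ℝ) :
    HasSum (fun k : ℕ => (2 * π : ℂ) * Complex.I *
      (((-1 : ℝ) ^ k / (Nat.factorial k * Nat.factorial (2 + k)) * (z / 2) ^ (2 + 2 * k) : ℝ) : ℂ))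
      (∫ θ in (0:ℝ)..2 * π, Complex.I * (Complex.exp (-(2 * θ * Complex.I)) *
        Complex.exp ((z * Real.sin θ : ℝ) * Complex.I))) := by
  have key := intervalIntegral.hasSum_integral_of_dominated_convergence (μ := volume)
    (a := 0) (b := 2 * π)
    (F := fun (k : ℕ) (θ : ℝ) => ((-(z / 2 : ℂ)) ^ k / (k.factorial : ℂ)) *
      (deriv (circleMap 0 1) θ • ((1 / (circleMap 0 1 θ - 0) ^ (k + 2 + 1)) •
        Complex.exp ((z / 2 : ℂ) * circleMap 0 1 θ))))
    (f := fun θ => Complex.I * (Complex.exp (-(2 * θ * Complex.I)) *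
        Complex.exp ((z * Real.sin θ : ℝ) * Complex.I)))
    (fun k _ => |z / 2| ^ k / k.factorial * Real.exp |z / 2|) ?_ ?_ ?_ ?_ ?_
  · refine (hasSum_congr_aux fun k => ?_).mp key
    rw [intervalIntegral.integral_const_mul]
    have h := DiffContOnCl.circleIntegral_one_div_sub_center_pow_smul (c := 0) (R := 1)
      (f := fun w => Complex.exp ((z / 2 : ℂ) * w)) one_pos (k + 2)
      (Differentiable.diffContOnCl (by fun_prop))
    rw [circleIntegral] at h
    rw [h, iteratedDeriv_cexp_const_mul]
    have h1 : ((2 + k).factorial : ℂ) ≠ 0 := by exact_mod_cast Nat.factorial_ne_zero _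
    have h2 : ((k).factorial : ℂ) ≠ 0 := by exact_mod_cast Nat.factorial_ne_zero _
    rw [add_comm k 2]
    push_cast
    simp only [smul_eq_mul, mul_zero, Complex.exp_zero, mul_one]
    rw [neg_pow (z / 2 : ℂ)]
    field_simp
    ring
  · intro k
    apply Continuous.aestronglyMeasurable
    have : Continuous fun θ : ℝ => (1 / (circleMap 0 1 θ - 0) ^ (k + 2 + 1)) := by
      apply Continuous.div continuous_const (by fun_prop)
      intro θ; simp
    simp only [deriv_circleMap]
    fun_prop
  · intro k
    refine Filter.Eventually.of_forall fun θ _ => ?_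
    simp only [norm_mul, norm_div, norm_pow, norm_neg, norm_smul, deriv_circleMap, sub_zero]
    simp only [norm_circleMap_zero, Complex.norm_I, Complex.norm_natCast, norm_one]
    have : ‖Complex.exp ((z / 2 : ℂ) * circleMap 0 1 θ)‖ ≤ Real.exp |z / 2| := by
      refine (Complex.norm_exp_le_exp_norm _).trans ?_
      simp [abs_div]
    simp only [Complex.norm_real, Complex.norm_ofNat, abs_one, one_pow, mul_one, one_mul, Real.norm_eq_abs, abs_div, div_one]
    simp only [abs_div] at this
    norm_num at this ⊢
    gcongr
  · refine Filter.Eventually.of_forall fun θ _ => ?_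
    exact (Real.summable_pow_div_factorial _).mul_right _
  · exact intervalIntegrable_const
  · refine Filter.Eventually.of_forall fun θ _ => ?_
    have h := (NormedSpace.expSeries_div_hasSum_exp (𝔸 := ℂ) (-(z/2) * (circleMap 0 1 θ)⁻¹)).mul_right
      (Complex.I * ((circleMap 0 1 θ)^2)⁻¹ * Complex.exp ((z / 2 : ℂ) * circleMap 0 1 θ))
    rw [← Complex.exp_eq_exp_ℂ] at h
    have hf : Complex.I * (Complex.exp (-(2 * θ * Complex.I)) *
        Complex.exp ((z * Real.sin θ : ℝ) * Complex.I)) =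
        Complex.exp (-(z/2) * (circleMap 0 1 θ)⁻¹) *
        (Complex.I * ((circleMap 0 1 θ)^2)⁻¹ * Complex.exp ((z / 2 : ℂ) * circleMap 0 1 θ)) := ?_
    · rw [hf]
      refine (hasSum_congr_aux fun k => ?_).mp h
      have : circleMap 0 1 θ ≠ 0 := by simp
      simp only [deriv_circleMap, smul_eq_mul, sub_zero]
      rw [mul_pow, inv_pow]
      generalize (-(z / 2 : ℂ)) ^ k = a
      field_simp
      ring
    · have h2 : ((circleMap 0 1 θ)^2)⁻¹ = Complex.exp (-(2 * θ * Complex.I)) := by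
        rw [aux_circ, ← Complex.exp_nat_mul, ← Complex.exp_neg]; congr 1; push_cast; ring
      have h3 : Complex.exp ((z * Real.sin θ : ℝ) * Complex.I) =
        Complex.exp (-(z/2) * (circleMap 0 1 θ)⁻¹) * Complex.exp ((z / 2 : ℂ) * circleMap 0 1 θ) := by
        rw [← Complex.exp_add]; congr 1
        have := aux_sin_s14 θ
        push_cast at this ⊢
        linear_combination (-(z/2) : ℂ) * this
      rw [h2, h3]; ring

theorem bessel_rep (z : ℝ) : (besselJ 2 z : ℂ) = (2 * π : ℂ)⁻¹ * ∫ θ in (0:ℝ)..2 * π,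
    Complex.exp (2 * θ * Complex.I) * Complex.exp (-(z * Real.sin θ : ℝ) * Complex.I) := by
  have h := (bessel_hasSum z).tsum_eq
  rw [tsum_mul_left, ← Complex.ofReal_tsum, intervalIntegral.integral_const_mul] at h
  have hpi : (π : ℂ) ≠ 0 := by exact_mod_cast pi_ne_zero
  have h' : (besselJ 2 z : ℂ) = (2 * π : ℂ)⁻¹ * ∫ θ in (0:ℝ)..2 * π,
      Complex.exp (-(2 * θ * Complex.I)) * Complex.exp ((z * Real.sin θ : ℝ) * Complex.I) := by
    unfold besselJ
    have hI := Complex.I_ne_zero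
    rw [eq_inv_mul_iff_mul_eq₀ (by simp [hpi])]
    apply mul_left_cancel₀ hI
    rw [← h]; ring
  have h'' := congrArg (starRingEnd ℂ) h'
  rw [Complex.conj_ofReal, map_mul, intervalIntegral.integral_of_le (by positivity), ← integral_conj] at h''
  rw [h'', intervalIntegral.integral_of_le (by positivity)]
  congr 1
  · simp [map_ofNat]
  · congr 1
    funext θ
    rw [map_mul, ← Complex.exp_conj, ← Complex.exp_conj]
    simp [map_ofNat, ← Complex.sin_conj]

theorem bessel_abs (z : ℝ) : |besselJ 2 z| ≤ 1 := by
  have h := congrArg norm (bessel_rep z)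
  rw [Complex.norm_real, Real.norm_eq_abs] at h
  rw [h, norm_mul]
  have : ‖∫ θ in (0:ℝ)..2 * π,
    Complex.exp (2 * θ * Complex.I) * Complex.exp (-(z * Real.sin θ : ℝ) * Complex.I)‖ ≤ 1 * |2 * π - 0| := by
    apply intervalIntegral.norm_integral_le_of_norm_le_const
    intro θ _
    rw [norm_mul, ← Complex.ofReal_neg, Complex.norm_exp_ofReal_mul_I]
    have : (2 * θ * Complex.I : ℂ) = ((2 * θ : ℝ) : ℂ) * Complex.I := by push_cast; ring
    rw [this, Complex.norm_exp_ofReal_mul_I]; simp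
  have hp := pi_pos
  rw [norm_inv, norm_mul, Complex.norm_real, Complex.norm_ofNat, Real.norm_eq_abs, abs_of_pos hp]
  rw [sub_zero, one_mul, abs_of_pos (by positivity)] at this
  rw [inv_mul_le_iff₀ (by positivity)]
  linarith

theorem bessel_cont : Continuous (besselJ 2) := by
  have h : besselJ 2 = fun z : ℝ => ((2 * π : ℂ)⁻¹ * ∫ θ in (0:ℝ)..2 * π,
    Complex.exp (2 * θ * Complex.I) * Complex.exp (-(z * Real.sin θ : ℝ) * Complex.I)).re := by
    funext z
    rw [← bessel_rep, Complex.ofReal_re]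
  rw [h]
  refine Complex.continuous_re.comp (continuous_const.mul ?_)
  apply intervalIntegral.continuous_parametric_intervalIntegral_of_continuous'
  fun_prop

theorem circ_int (p q R : ℂ) (hp : 0 < p.re) (hq : ‖q‖ < 1) (hq0 : q ≠ 0) (hR0 : R ≠ 0)
    (h1 : π * (q + q⁻¹) = 2 * R) (h2 : π * (q⁻¹ - q) = 2 * p) :
    ∫ θ in (0:ℝ)..2 * π, Complex.exp (2 * θ * Complex.I) / (p + (π * Real.sin θ : ℝ) * Complex.I)
      = 2 * π * (q ^ 2 / R) := by
  have hpi : (π : ℂ) ≠ 0 := by exact_mod_cast pi_ne_zero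
  have hne : ∀ w : ℂ, ‖w‖ ≤ 1 → w + q⁻¹ ≠ 0 := by
    intro w hw h
    have : ‖q⁻¹‖ = ‖w‖ := by rw [← norm_neg w]; congr 1; linear_combination h
    rw [norm_inv] at this
    have h3 : 1 < ‖q‖⁻¹ := (one_lt_inv₀ (norm_pos_iff.mpr hq0)).mpr hq
    linarith
  have h := Complex.circleIntegral_sub_inv_smul_of_differentiable_on_off_countable (c := 0) (R := 1)
    (w := q) (f := fun w => 2 * w ^ 2 / (π * (w + q⁻¹))) Set.countable_empty (by simpa using hq)
    (by
      apply ContinuousOn.div (by fun_prop) (by fun_prop)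
      intro w hw
      exact mul_ne_zero hpi (hne w (by simpa using hw)))
    (by
      intro w hw
      apply DifferentiableAt.div (by fun_prop) (by fun_prop)
      exact mul_ne_zero hpi (hne w (mem_ball_zero_iff.mp hw.1).le))
  rw [circleIntegral] at h
  have e : ∀ θ : ℝ, deriv (circleMap 0 1) θ • (circleMap 0 1 θ - q)⁻¹ •
      (2 * (circleMap 0 1 θ) ^ 2 / (π * (circleMap 0 1 θ + q⁻¹))) = Complex.I *
      (Complex.exp (2 * θ * Complex.I) / (p + (π * Real.sin θ : ℝ) * Complex.I)) := by
    intro θ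
    have hs := aux_sin_s14 θ
    have hw2 : Complex.exp (2 * θ * Complex.I) = (circleMap 0 1 θ) ^ 2 := by
      rw [aux_circ, ← Complex.exp_nat_mul]; congr 1; push_cast; ring
    have hw0 : circleMap 0 1 θ ≠ 0 := by simp
    have hwn : ‖circleMap 0 1 θ‖ = 1 := by simp
    rw [hw2, deriv_circleMap]
    push_cast at hs ⊢
    have hd : p + π * Complex.sin θ * Complex.I ≠ 0 := by
      intro h
      have := congrArg Complex.re h
      rw [← Complex.ofReal_sin, ← Complex.ofReal_mul] at this
      simp at this
      linarith
    have hd1 : circleMap 0 1 θ - q ≠ 0 := by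
      intro h
      rw [sub_eq_zero.mp h] at hwn; linarith
    have hd2 := hne _ hwn.le
    have hm : (circleMap 0 1 θ - q) * (π * (circleMap 0 1 θ + q⁻¹)) =
        2 * circleMap 0 1 θ * (p + π * Complex.sin θ * Complex.I) := by
      have e1 : circleMap 0 1 θ * (circleMap 0 1 θ)⁻¹ = 1 := mul_inv_cancel₀ hw0
      have e2 : q * q⁻¹ = 1 := mul_inv_cancel₀ hq0
      linear_combination (circleMap 0 1 θ) * h2 + π * circleMap 0 1 θ * hs - π * e2 + π * e1
    simp only [smul_eq_mul]
    rw [← mul_assoc, ← div_eq_mul_inv, div_mul_div_comm, hm]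
    field_simp
  simp only [e] at h
  rw [intervalIntegral.integral_const_mul] at h
  have hI := Complex.I_ne_zero
  apply mul_left_cancel₀ hI
  rw [h]
  simp only [smul_eq_mul]
  rw [h1]
  field_simp

theorem laplace (p q R : ℂ) (hp : 0 < p.re) (hq : ‖q‖ < 1) (hq0 : q ≠ 0) (hR0 : R ≠ 0)
    (h1 : π * (q + q⁻¹) = 2 * R) (h2 : π * (q⁻¹ - q) = 2 * p) :
    ∫ x in Set.Ioi (0:ℝ), Complex.exp (-p * x) * (besselJ 2 (π * x) : ℂ) = q ^ 2 / R := by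
  have hpi : (π : ℂ) ≠ 0 := by exact_mod_cast pi_ne_zero
  have hsw := integral_integral_swap (μ := volume.restrict (Set.Ioi (0:ℝ)))
    (ν := volume.restrict (Set.Ioc (0:ℝ) (2 * π)))
    (f := fun x θ : ℝ => Complex.exp (-p * x) * (Complex.exp (2 * θ * Complex.I) *
      Complex.exp (-(π * x * Real.sin θ : ℝ) * Complex.I))) (by
      have hb : Integrable (fun z : ℝ × ℝ => Complex.exp (-p * z.1) * (1 : ℂ))
        ((volume.restrict (Set.Ioi (0:ℝ))).prod (volume.restrict (Set.Ioc (0:ℝ) (2 * π)))) :=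
        Integrable.mul_prod (f := fun x : ℝ => Complex.exp (-p * x)) (g := fun _ : ℝ => (1:ℂ))
          (integrableOn_exp_mul_complex_Ioi (by simpa using hp) 0) (integrable_const _)
      refine hb.mono (Continuous.aestronglyMeasurable ?_) (Filter.Eventually.of_forall ?_)
      · simp only [Function.uncurry_def]; fun_prop
      · rintro ⟨x, θ⟩
        simp only [Function.uncurry_apply_pair, norm_mul]
        have : (2 * θ * Complex.I : ℂ) = ((2 * θ : ℝ) : ℂ) * Complex.I := by push_cast; ring
        rw [this, Complex.norm_exp_ofReal_mul_I, ← Complex.ofReal_neg, Complex.norm_exp_ofReal_mul_I]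
        simp)
  have hL : ∀ x : ℝ, Complex.exp (-p * x) * (besselJ 2 (π * x) : ℂ) = (2 * π : ℂ)⁻¹ *
      ∫ θ in Set.Ioc (0:ℝ) (2 * π), Complex.exp (-p * x) * (Complex.exp (2 * θ * Complex.I) *
      Complex.exp (-(π * x * Real.sin θ : ℝ) * Complex.I)) := by
    intro x
    rw [bessel_rep, intervalIntegral.integral_of_le (by positivity), integral_const_mul]
    ring
  simp only [hL]
  rw [integral_const_mul, hsw]
  have hin : ∀ θ : ℝ, ∫ x in Set.Ioi (0:ℝ), Complex.exp (-p * x) * (Complex.exp (2 * θ * Complex.I) *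
      Complex.exp (-(π * x * Real.sin θ : ℝ) * Complex.I)) =
      Complex.exp (2 * θ * Complex.I) / (p + (π * Real.sin θ : ℝ) * Complex.I) := by
    intro θ
    have hre : (-(p + (π * Real.sin θ : ℝ) * Complex.I)).re < 0 := by
      rw [Complex.neg_re, Complex.add_re, Complex.re_ofReal_mul]; simpa using hp
    have e : ∀ x : ℝ, Complex.exp (-p * x) * (Complex.exp (2 * θ * Complex.I) *
      Complex.exp (-(π * x * Real.sin θ : ℝ) * Complex.I)) = Complex.exp (2 * θ * Complex.I) *
        Complex.exp (-(p + (π * Real.sin θ : ℝ) * Complex.I) * x) := by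
      intro x
      rw [mul_left_comm, ← Complex.exp_add]; congr 2; push_cast; ring
    simp only [e]
    rw [integral_const_mul, integral_exp_mul_complex_Ioi hre]
    simp only [Complex.ofReal_zero, mul_zero, Complex.exp_zero]
    rw [neg_div_neg_eq]; ring
  simp only [hin]
  rw [← intervalIntegral.integral_of_le (by positivity), circ_int p q R hp hq hq0 hR0 h1 h2]
  field_simp

noncomputable def auxR (p : ℂ) : ℂ := (p ^ 2 + π ^ 2) ^ ((2 : ℂ)⁻¹)

noncomputable def auxL (p : ℂ) : ℂ := ((auxR p - p) / π) ^ 2 / auxR p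

theorem auxR_sq (p : ℂ) : auxR p ^ 2 = p ^ 2 + π ^ 2 := by
  have := Complex.cpow_nat_inv_pow (p ^ 2 + π ^ 2) (n := 2) two_ne_zero
  unfold auxR
  exact_mod_cast this

theorem auxR_re (p : ℂ) : 0 ≤ (auxR p).re := by
  unfold auxR
  rw [Complex.cpow_inv_two_re]
  positivity

theorem auxq (p : ℂ) (hp : 0 < p.re) :
    ‖(auxR p - p) / π‖ < 1 ∧ (auxR p - p) / (π : ℂ) ≠ 0 ∧ auxR p ≠ 0 ∧
    ((auxR p - p) / (π : ℂ))⁻¹ = (auxR p + p) / π := by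
  have hpi : (π : ℂ) ≠ 0 := by exact_mod_cast pi_ne_zero
  have hm : ((auxR p - p) / (π : ℂ)) * ((auxR p + p) / π) = 1 := by
    field_simp
    linear_combination auxR_sq p
  have hinv := inv_eq_of_mul_eq_one_right hm
  have hq0 : (auxR p - p) / (π : ℂ) ≠ 0 := left_ne_zero_of_mul_eq_one hm
  have hR := auxR_re p
  have e1 := congrArg Complex.re hinv
  rw [Complex.inv_re] at e1
  have e2 : ((auxR p - p) / (π : ℂ)).re = ((auxR p).re - p.re) / π := by
    rw [Complex.div_ofReal_re]; simp
  have e3 : ((auxR p + p) / (π : ℂ)).re = ((auxR p).re + p.re) / π := by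
    rw [Complex.div_ofReal_re]; simp
  have hN : 0 < Complex.normSq ((auxR p - p) / (π : ℂ)) := Complex.normSq_pos.mpr hq0
  have hnn := Complex.normSq_eq_norm_sq ((auxR p - p) / (π : ℂ))
  set N := Complex.normSq ((auxR p - p) / (π : ℂ))
  rw [e3, e2] at e1
  have hpp := pi_pos
  have e4 : (auxR p).re - p.re = N * ((auxR p).re + p.re) := by
    field_simp at e1
    linarith
  have hN1 : N < 1 := by nlinarith
  have hR0 : auxR p ≠ 0 := by
    intro h
    rw [h] at e4
    simp at e4
    nlinarith
  refine ⟨?_, hq0, hR0, hinv⟩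
  rw [hnn] at hN1
  exact (sq_lt_one_iff₀ (norm_nonneg _)).mp hN1

theorem laplace' (p : ℂ) (hp : 0 < p.re) :
    ∫ x in Set.Ioi (0:ℝ), Complex.exp (-p * x) * (besselJ 2 (π * x) : ℂ) = auxL p := by
  have hpi : (π : ℂ) ≠ 0 := by exact_mod_cast pi_ne_zero
  obtain ⟨h1, h2, h3, h4⟩ := auxq p hp
  apply laplace p _ _ hp h1 h2 h3
  · rw [h4]; field_simp; ring
  · rw [h4]; field_simp; ring

theorem auxL_bound (ε t : ℝ) (hε : 0 < ε) (ht0 : 0 ≤ t) (ht : t ≤ π) :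
    ‖Real.sin t * (auxL (ε - t * Complex.I)).im‖ ≤ 1 := by
  have hpp := pi_pos
  obtain ⟨h1, h2, h3, h4⟩ := auxq (ε - t * Complex.I) (by simpa using hε)
  have hs0 : 0 ≤ Real.sin t := sin_nonneg_of_nonneg_of_le_pi ht0 ht
  have hs : Real.sin t ≤ π - t := by
    rw [← Real.sin_pi_sub]; exact Real.sin_le (by linarith)
  have hR : π - t ≤ ‖auxR (ε - t * Complex.I)‖ := by
    have e : ‖auxR (ε - t * Complex.I)‖ ^ 2 =
        ‖((ε - t * Complex.I) + π * Complex.I : ℂ)‖ * ‖((ε - t * Complex.I) - π * Complex.I : ℂ)‖ := by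
      rw [← norm_pow, auxR_sq, ← norm_mul]
      congr 1
      linear_combination (π ^ 2 : ℂ) * Complex.I_sq
    have b1 : π - t ≤ ‖((ε - t * Complex.I) + π * Complex.I : ℂ)‖ := by
      refine le_trans ?_ (Complex.abs_im_le_norm _)
      refine le_trans ?_ (le_abs_self _)
      apply le_of_eq; simp; try ring
    have b2 : π - t ≤ ‖((ε - t * Complex.I) - π * Complex.I : ℂ)‖ := by
      refine le_trans ?_ (Complex.abs_im_le_norm _)
      refine le_trans ?_ (neg_le_abs _)
      simp; linarith
    have : (π - t) ^ 2 ≤ ‖auxR (ε - t * Complex.I)‖ ^ 2 := by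
      rw [e, sq]; gcongr
    exact abs_le_of_sq_le_sq'  this (norm_nonneg _) |>.2
  have hL : ‖auxL (ε - t * Complex.I)‖ ≤ 1 / ‖auxR (ε - t * Complex.I)‖ := by
    unfold auxL
    rw [norm_div, norm_pow]
    gcongr
    exact pow_le_one₀ (norm_nonneg _) h1.le
  have hRp : 0 < ‖auxR (ε - t * Complex.I)‖ := norm_pos_iff.mpr h3
  rw [norm_mul, Real.norm_eq_abs, Real.norm_eq_abs, abs_of_nonneg hs0]
  calc Real.sin t * |(auxL (ε - t * Complex.I)).im|
      ≤ ‖auxR (ε - t * Complex.I)‖ * (1 / ‖auxR (ε - t * Complex.I)‖) := by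
        gcongr
        · linarith
        · exact (Complex.abs_im_le_norm _).trans hL
    _ = 1 := by field_simp

theorem auxL_lim (t : ℝ) (ht0 : 0 < t) (ht : t < π) :
    Filter.Tendsto (fun ε : ℝ => (auxL (ε - t * Complex.I)).im) (nhdsWithin 0 (Set.Ioi 0))
      (nhds (2 * t / π ^ 2)) := by
  have hpp := pi_pos
  have hpi : (π : ℂ) ≠ 0 := by exact_mod_cast pi_ne_zero
  have hpos : 0 < π ^ 2 - t ^ 2 := by nlinarith
  have h0 : (((0:ℝ) : ℂ) - t * Complex.I) ^ 2 + π ^ 2 = ((π ^ 2 - t ^ 2 : ℝ) : ℂ) := by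
    push_cast; linear_combination (t ^ 2 : ℂ) * Complex.I_sq
  obtain ⟨r, hr, hr0⟩ : ∃ r : ℝ, 0 < r ∧ auxR (((0:ℝ) : ℂ) - t * Complex.I) = r := by
    refine ⟨(π ^ 2 - t ^ 2) ^ ((2:ℝ)⁻¹), by positivity, ?_⟩
    unfold auxR
    rw [h0, Complex.ofReal_cpow hpos.le]; push_cast; rfl
  have hRc : ContinuousAt (fun ε : ℝ => auxR (ε - t * Complex.I)) 0 := by
    unfold auxR
    apply ContinuousAt.cpow (by fun_prop) (by fun_prop)
    rw [h0]
    exact Complex.ofReal_mem_slitPlane.mpr hpos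
  have hLc : ContinuousAt (fun ε : ℝ => (auxL (ε - t * Complex.I)).im) 0 := by
    unfold auxL
    apply Complex.continuous_im.continuousAt.comp
    apply ContinuousAt.div _ hRc
    · rw [hr0]; exact_mod_cast hr.ne'
    · exact ((hRc.sub (by fun_prop)).div_const _).pow 2
  have hv : (auxL (((0:ℝ) : ℂ) - t * Complex.I)).im = 2 * t / π ^ 2 := by
    unfold auxL
    rw [hr0]
    have hrc : (r : ℂ) ≠ 0 := by exact_mod_cast hr.ne'
    have : (((r : ℂ) - (((0:ℝ) : ℂ) - t * Complex.I)) / π) ^ 2 / r =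
        (((r ^ 2 - t ^ 2) / (π ^ 2 * r) : ℝ) : ℂ) + ((2 * t / π ^ 2 : ℝ) : ℂ) * Complex.I := by
      push_cast
      field_simp
      linear_combination (t ^ 2 : ℂ) * Complex.I_sq
    rw [this]
    rw [Complex.add_im, Complex.im_ofReal_mul, Complex.ofReal_im]; simp
  rw [← hv]
  exact hLc.tendsto.mono_left nhdsWithin_le_nhds

theorem laplace_sin (ε t : ℝ) (hε : 0 < ε) :
    ∫ x in Set.Ioi (0:ℝ), Real.exp (-ε * x) * besselJ 2 (π * x) * Real.sin (x * t) =
      (auxL (ε - t * Complex.I)).im := by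
  have hre : 0 < ((ε : ℂ) - t * Complex.I).re := by simpa using hε
  rw [← laplace' _ hre]
  have hint : Integrable (fun x : ℝ => Complex.exp (-((ε : ℂ) - t * Complex.I) * x) *
      (besselJ 2 (π * x) : ℂ)) (volume.restrict (Set.Ioi (0:ℝ))) := by
    have hb := integrableOn_exp_mul_complex_Ioi (a := -((ε : ℂ) - t * Complex.I)) (by simpa using hε) 0
    refine Integrable.mono hb (Continuous.aestronglyMeasurable ?_) (Filter.Eventually.of_forall ?_)
    · have := bessel_cont
      fun_prop
    · intro x
      rw [norm_mul, Complex.norm_real, Real.norm_eq_abs]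
      exact mul_le_of_le_one_right (norm_nonneg _) (bessel_abs _)
  have := Complex.imCLM.integral_comp_comm hint
  simp only [Complex.imCLM_apply] at this
  rw [← this]
  congr 1
  funext x
  have e : -((ε : ℂ) - t * Complex.I) * x = ((-ε * x : ℝ) : ℂ) + ((x * t : ℝ) : ℂ) * Complex.I := by
    push_cast; ring
  rw [e, Complex.im_mul_ofReal, Complex.exp_add, ← Complex.ofReal_exp, Complex.im_ofReal_mul,
    Complex.exp_ofReal_mul_I_im]
  ring

noncomputable def auxS (x : ℝ) : ℝ := π⁻¹ * ∫ t in (0:ℝ)..π, Real.sin t * Real.sin (x * t)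

theorem auxS_cont : Continuous auxS := by
  unfold auxS
  refine continuous_const.mul ?_
  apply intervalIntegral.continuous_parametric_intervalIntegral_of_continuous'
  fun_prop

theorem auxS_eq (x : ℝ) (hx : 0 < x) (hx1 : x ≠ 1) : auxS x = Real.sin (π * x) / (π * (1 - x ^ 2)) := by
  have h1 : 1 - x ≠ 0 := sub_ne_zero.mpr hx1.symm
  have h2 : 1 + x ≠ 0 := by positivity
  have h3 : 1 - x ^ 2 ≠ 0 := by
    have : 1 - x ^ 2 = (1 - x) * (1 + x) := by ring
    rw [this]; exact mul_ne_zero h1 h2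
  have hpp := pi_pos
  have h : ∫ t in (0:ℝ)..π, Real.sin t * Real.sin (x * t) =
      (fun t => (x * Real.sin t * Real.cos (x * t) - Real.cos t * Real.sin (x * t)) / (1 - x ^ 2)) π -
      (fun t => (x * Real.sin t * Real.cos (x * t) - Real.cos t * Real.sin (x * t)) / (1 - x ^ 2)) 0 := by
    apply intervalIntegral.integral_eq_sub_of_hasDerivAt (f := fun t => (x * Real.sin t * Real.cos (x * t) - Real.cos t * Real.sin (x * t)) / (1 - x ^ 2))
    · intro t _
      have hs : HasDerivAt (fun t => Real.sin (x * t)) (Real.cos (x * t) * x) t := by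
        simpa using ((hasDerivAt_id t).const_mul x).sin
      have hc : HasDerivAt (fun t => Real.cos (x * t)) (-Real.sin (x * t) * x) t := by
        simpa using ((hasDerivAt_id t).const_mul x).cos
      refine HasDerivAt.congr_deriv (((((Real.hasDerivAt_sin t).const_mul x).mul hc).sub
        ((Real.hasDerivAt_cos t).mul hs)).div_const (1 - x ^ 2)) ?_
      field_simp
      ring
    · apply Continuous.intervalIntegrable; fun_prop
  unfold auxS
  rw [h]
  simp
  rw [mul_comm x π]
  field_simp

theorem auxS_abs (x : ℝ) (hx : 0 < x) : |auxS x| ≤ 5 * (1 + x ^ 2)⁻¹ := by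
  have hpp := pi_pos
  rw [← div_eq_mul_inv, le_div_iff₀ (by positivity)]
  rcases le_or_gt x 2 with h | h
  · have : |auxS x| ≤ 1 := by
      unfold auxS
      have : ‖∫ t in (0:ℝ)..π, Real.sin t * Real.sin (x * t)‖ ≤ 1 * |π - 0| := by
        apply intervalIntegral.norm_integral_le_of_norm_le_const
        intro t _
        rw [norm_mul]
        exact mul_le_one₀ (Real.abs_sin_le_one _) (norm_nonneg _) (Real.abs_sin_le_one _)
      rw [abs_mul, abs_inv, abs_of_pos hpp, inv_mul_le_iff₀ hpp]
      rw [sub_zero, one_mul, abs_of_pos hpp, Real.norm_eq_abs] at this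
      linarith
    nlinarith [abs_nonneg (auxS x)]
  · rw [auxS_eq x hx (by linarith), abs_div, abs_mul, abs_of_pos hpp, abs_of_neg (by nlinarith : 1 - x ^ 2 < 0)]
    have h3 := Real.abs_sin_le_one (π * x)
    have hpos : 0 < -(1 - x ^ 2) := by nlinarith
    rw [div_mul_eq_mul_div, div_le_iff₀ (by positivity)]
    have := pi_gt_three
    nlinarith [mul_pos hpos (sub_pos.mpr this)]

theorem gamma_eq (x : ℝ) (hx : 0 < x) (hx1 : x ≠ 1) :
    x * (Real.Gamma (2 + x) * Real.Gamma (2 - x))⁻¹ = auxS x := by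
  have h1 : 1 - x ≠ 0 := sub_ne_zero.mpr hx1.symm
  have h2 : 1 + x ≠ 0 := by positivity
  have e1 : Real.Gamma (2 + x) = (1 + x) * (x * Real.Gamma x) := by
    rw [← Real.Gamma_add_one hx.ne', add_comm x 1, ← Real.Gamma_add_one h2]; congr 1; ring
  have e2 : Real.Gamma (2 - x) = (1 - x) * Real.Gamma (1 - x) := by
    rw [← Real.Gamma_add_one h1]; congr 1; ring
  have e3 : Real.Gamma (2 + x) * Real.Gamma (2 - x) = (1 + x) * x * (1 - x) * (π / Real.sin (π * x)) := by
    rw [← Real.Gamma_mul_Gamma_one_sub, e1, e2]; ring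
  rw [e3, auxS_eq x hx hx1, mul_inv, inv_div]
  have h3 : 1 - x ^ 2 = (1 - x) * (1 + x) := by ring
  rw [h3]
  field_simp

theorem fub_int (ε : ℝ) (hε : 0 < ε) : Integrable
    (Function.uncurry fun x t : ℝ => Real.exp (-ε * x) * besselJ 2 (π * x) * (Real.sin t * Real.sin (x * t)))
    ((volume.restrict (Set.Ioi (0:ℝ))).prod (volume.restrict (Set.Ioc (0:ℝ) π))) := by
  have hb : Integrable (fun z : ℝ × ℝ => Real.exp (-ε * z.1) * (1 : ℝ))
    ((volume.restrict (Set.Ioi (0:ℝ))).prod (volume.restrict (Set.Ioc (0:ℝ) π))) :=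
    Integrable.mul_prod (f := fun x : ℝ => Real.exp (-ε * x)) (g := fun _ : ℝ => (1:ℝ))
      (integrableOn_exp_mul_Ioi (by simpa using hε) 0) (integrable_const _)
  refine hb.mono (Continuous.aestronglyMeasurable ?_) (Filter.Eventually.of_forall ?_)
  · have := bessel_cont
    simp only [Function.uncurry_def]; fun_prop
  · rintro ⟨x, t⟩
    simp only [Function.uncurry_apply_pair, norm_mul, mul_one, Real.norm_eq_abs]
    have h1 := bessel_abs (π * x)
    have h2 : |Real.sin t| * |Real.sin (x * t)| ≤ 1 :=
      mul_le_one₀ (Real.abs_sin_le_one _) (abs_nonneg _) (Real.abs_sin_le_one _)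
    rw [mul_assoc]
    exact mul_le_of_le_one_right (abs_nonneg _) (mul_le_one₀ h1 (by positivity) h2)

theorem inner_eq (ε t : ℝ) (hε : 0 < ε) :
    ∫ x in Set.Ioi (0:ℝ), Real.exp (-ε * x) * besselJ 2 (π * x) * (Real.sin t * Real.sin (x * t)) =
    Real.sin t * (auxL (ε - t * Complex.I)).im := by
  rw [← laplace_sin ε t hε, ← integral_const_mul]
  congr 1; funext x; ring

theorem reg_eq (ε : ℝ) (hε : 0 < ε) :
    ∫ x in Set.Ioi (0:ℝ), Real.exp (-ε * x) * besselJ 2 (π * x) * auxS x =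
      π⁻¹ * ∫ t in (0:ℝ)..π, Real.sin t * (auxL (ε - t * Complex.I)).im := by
  have hsw := integral_integral_swap (fub_int ε hε)
  simp only [inner_eq ε _ hε] at hsw
  rw [intervalIntegral.integral_of_le pi_pos.le, ← hsw, ← integral_const_mul]
  congr 1; funext x
  rw [integral_const_mul, auxS, intervalIntegral.integral_of_le pi_pos.le]
  ring

theorem int_t_sin : ∫ t in (0:ℝ)..π, Real.sin t * (2 * t / π ^ 2) = 2 / π := by
  have hpp := pi_pos
  have h : ∫ t in (0:ℝ)..π, Real.sin t * (2 * t / π ^ 2) =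
      (fun t => (Real.sin t - t * Real.cos t) * (2 / π ^ 2)) π -
      (fun t => (Real.sin t - t * Real.cos t) * (2 / π ^ 2)) 0 := by
    apply intervalIntegral.integral_eq_sub_of_hasDerivAt (f := fun t => (Real.sin t - t * Real.cos t) * (2 / π ^ 2))
    · intro t _
      refine HasDerivAt.congr_deriv (((Real.hasDerivAt_sin t).sub ((hasDerivAt_id t).mul (Real.hasDerivAt_cos t))).mul_const
        (2 / π ^ 2)) ?_
      simp
      ring
    · apply Continuous.intervalIntegrable; fun_prop
  rw [h]
  simp
  field_simp

theorem lim1 : Filter.Tendsto (fun ε : ℝ => π⁻¹ * ∫ t in (0:ℝ)..π, Real.sin t * (auxL (ε - t * Complex.I)).im)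
    (nhdsWithin 0 (Set.Ioi 0)) (nhds (2 / π ^ 2)) := by
  have hpp := pi_pos
  have : 2 / π ^ 2 = π⁻¹ * ∫ t in (0:ℝ)..π, Real.sin t * (2 * t / π ^ 2) := by
    rw [int_t_sin]; field_simp
  rw [this]
  refine Filter.Tendsto.const_mul _ ?_
  apply intervalIntegral.tendsto_integral_filter_of_dominated_convergence (fun _ => (1:ℝ))
  · filter_upwards [self_mem_nhdsWithin] with ε hε
    rw [Set.uIoc_of_le hpp.le]
    have := (fub_int ε hε).integral_prod_right.aestronglyMeasurable
    simpa only [Function.uncurry_apply_pair, inner_eq ε _ hε] using this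
  · filter_upwards [self_mem_nhdsWithin] with ε hε
    refine Filter.Eventually.of_forall fun t ht => ?_
    rw [Set.uIoc_of_le hpp.le] at ht
    exact auxL_bound ε t hε ht.1.le ht.2
  · exact intervalIntegrable_const
  · have : ∀ᵐ t : ℝ, t ≠ π := Measure.ae_ne volume π
    filter_upwards [this] with t hne ht
    rw [Set.uIoc_of_le hpp.le] at ht
    exact (auxL_lim t ht.1 (lt_of_le_of_ne ht.2 hne)).const_mul _

theorem lim2 : Filter.Tendsto (fun ε : ℝ => ∫ x in Set.Ioi (0:ℝ), Real.exp (-ε * x) * besselJ 2 (π * x) * auxS x)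
    (nhdsWithin 0 (Set.Ioi 0)) (nhds (∫ x in Set.Ioi (0:ℝ), besselJ 2 (π * x) * auxS x)) := by
  have hc1 := bessel_cont
  have hc2 := auxS_cont
  apply MeasureTheory.tendsto_integral_filter_of_dominated_convergence (fun x => 5 * (1 + x ^ 2)⁻¹)
  · refine Filter.Eventually.of_forall fun ε => Continuous.aestronglyMeasurable ?_
    fun_prop
  · filter_upwards [self_mem_nhdsWithin] with ε hε
    refine (ae_restrict_iff' measurableSet_Ioi).mpr (Filter.Eventually.of_forall fun x hx => ?_)
    have hx : 0 < x := hx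
    have hε : 0 < ε := hε
    refine le_trans ?_ (auxS_abs x hx)
    rw [norm_mul, norm_mul, Real.norm_eq_abs, Real.norm_eq_abs, Real.norm_eq_abs]
    refine mul_le_of_le_one_left (abs_nonneg _) (mul_le_one₀ ?_ (abs_nonneg _) (bessel_abs _))
    rw [abs_of_pos (Real.exp_pos _)]
    apply Real.exp_le_one_iff.mpr
    nlinarith
  · exact (integrable_inv_one_add_sq.const_mul 5).integrableOn
  · refine Filter.Eventually.of_forall fun x => ?_
    have : ContinuousAt (fun ε : ℝ => Real.exp (-ε * x) * besselJ 2 (π * x) * auxS x) 0 := by fun_prop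
    have := this.tendsto.mono_left (nhdsWithin_le_nhds (s := Set.Ioi 0))
    simpa using this

theorem hankel_gamma_special_case_J2 :
    ∫ x in Set.Ioi (0 : ℝ),
        x * besselJ 2 (π * x) * (Real.Gamma (2 + x) * Real.Gamma (2 - x))⁻¹ = 2 / π ^ 2 := by
  have h : ∫ x in Set.Ioi (0 : ℝ),
        x * besselJ 2 (π * x) * (Real.Gamma (2 + x) * Real.Gamma (2 - x))⁻¹ =
        ∫ x in Set.Ioi (0:ℝ), besselJ 2 (π * x) * auxS x := by
    apply setIntegral_congr_ae measurableSet_Ioi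
    filter_upwards [Measure.ae_ne volume (1:ℝ)] with x hx1 hx
    rw [← gamma_eq x hx hx1]; ring
  rw [h]
  refine tendsto_nhds_unique lim2 (lim1.congr' ?_)
  filter_upwards [self_mem_nhdsWithin] with ε hε
  exact (reg_eq ε hε).symm
end

section
/- Let α, β > 0 be real numbers. Then the fourth derivative at x = 0 of the function g(x) = 1/(Γ(α + βx)·Γ(α − βx)) satisfies a_2^{(1)} = g''''(0) = (β^4 / Γ(α)^2) · [12·(ψ^{(1)}(α))² − 2·ψ^{(3)}(α)], where ψ^{(1)} and ψ^{(3)} denote the first and third derivatives of the digamma function ψ = Γ'/Γ. -/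
open Real

/-- The digamma function `ψ = Γ'/Γ`. -/
noncomputable def digamma (x : ℝ) : ℝ := deriv Real.Gamma x / Real.Gamma x

/-- The `n`-th polygamma function, the `n`-th derivative of the digamma function. -/
noncomputable def polygamma (n : ℕ) (x : ℝ) : ℝ := iteratedDeriv n digamma x
lemma aux_step {S : Set ℝ} (hS : IsOpen S) {f F F' : ℝ → ℝ} {n : ℕ}
    (h : ∀ x ∈ S, iteratedDeriv n f x = F x) (hF : ∀ x ∈ S, HasDerivAt F (F' x) x) :
    ∀ x ∈ S, iteratedDeriv (n + 1) f x = F' x := by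
  intro x hx
  rw [iteratedDeriv_succ]
  have : iteratedDeriv n f =ᶠ[nhds x] F := by
    filter_upwards [hS.mem_nhds hx] with y hy using h y hy
  rw [this.deriv_eq, (hF x hx).deriv]

lemma aux_gamma_analytic {x : ℝ} (hx : 0 < x) : AnalyticAt ℝ Real.Gamma x := by
  have h1 : AnalyticAt ℂ Complex.Gamma (x : ℂ) := by
    have hd : DifferentiableOn ℂ Complex.Gamma {z : ℂ | 0 < z.re} := by
      intro z hz
      refine (Complex.differentiableAt_Gamma z ?_).differentiableWithinAt
      intro m hm
      have hz' : 0 < z.re := hz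
      rw [hm] at hz'
      simp at hz'
      have : (0:ℝ) ≤ m := m.cast_nonneg
      linarith
    exact hd.analyticAt ((isOpen_lt continuous_const Complex.continuous_re).mem_nhds
      (by simpa using hx))
  have h2 : AnalyticAt ℝ Complex.Gamma (x : ℂ) := h1.restrictScalars
  have h3 : AnalyticAt ℝ (fun y : ℝ => Complex.Gamma (y : ℂ)) x :=
    h2.fun_comp (Complex.ofRealCLM.analyticAt x)
  exact (Complex.reCLM.analyticAt _).fun_comp h3

lemma aux_digamma_analytic {x : ℝ} (hx : 0 < x) : AnalyticAt ℝ digamma x := by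
  have h := aux_gamma_analytic hx
  exact h.deriv.div h (Real.Gamma_pos_of_pos hx).ne'

lemma aux_poly (n : ℕ) {x : ℝ} (hx : 0 < x) :
    HasDerivAt (polygamma n) (polygamma (n + 1) x) x := by
  have h : AnalyticAt ℝ (polygamma n) x := by
    have := (aux_digamma_analytic hx).iterated_deriv n
    rw [← iteratedDeriv_eq_iterate] at this
    exact this
  have h2 := h.differentiableAt.hasDerivAt
  have h3 : polygamma (n + 1) x = deriv (polygamma n) x := by
    unfold polygamma
    rw [iteratedDeriv_succ]
  rw [h3]
  exact h2

theorem gammaProd_fourth_deriv_at_zero (α β : ℝ) (hα : 0 < α) (hβ : 0 < β) :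
    iteratedDeriv 4 (fun x : ℝ => (Real.Gamma (α + β * x) * Real.Gamma (α - β * x))⁻¹) 0
      = (β ^ 4 / (Real.Gamma α) ^ 2)
          * (12 * (polygamma 1 α) ^ 2 - 2 * polygamma 3 α) := by
  set g : ℝ → ℝ := fun x => (Real.Gamma (α + β * x) * Real.Gamma (α - β * x))⁻¹ with hg
  let S : Set ℝ := {x | 0 < α + β * x} ∩ {x | 0 < α - β * x}
  have hS : IsOpen S := (isOpen_lt (by fun_prop) (by fun_prop)).inter
    (isOpen_lt (by fun_prop) (by fun_prop))
  have hu : ∀ x : ℝ, HasDerivAt (fun x => α + β * x) β x := fun x => by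
    simpa using ((hasDerivAt_id x).const_mul β).const_add α
  have hv : ∀ x : ℝ, HasDerivAt (fun x => α - β * x) (-β) x := fun x => by
    simpa using ((hasDerivAt_id x).const_mul β).const_sub α
  have hPu : ∀ n, ∀ x ∈ S, HasDerivAt (fun x => polygamma n (α + β * x))
      (polygamma (n + 1) (α + β * x) * β) x := fun n x hx =>
    (aux_poly n hx.1).comp x (hu x)
  have hPv : ∀ n, ∀ x ∈ S, HasDerivAt (fun x => polygamma n (α - β * x))
      (polygamma (n + 1) (α - β * x) * (-β)) x := fun n x hx =>
    (aux_poly n hx.2).comp x (hv x)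
  let A1 : ℝ → ℝ := fun x => -β * (polygamma 0 (α + β * x) - polygamma 0 (α - β * x))
  let A2 : ℝ → ℝ := fun x => -β ^ 2 * (polygamma 1 (α + β * x) + polygamma 1 (α - β * x))
  let A3 : ℝ → ℝ := fun x => -β ^ 3 * (polygamma 2 (α + β * x) - polygamma 2 (α - β * x))
  let A4 : ℝ → ℝ := fun x => -β ^ 4 * (polygamma 3 (α + β * x) + polygamma 3 (α - β * x))
  have hA1 : ∀ x ∈ S, HasDerivAt A1 (A2 x) x := fun x hx => by
    refine HasDerivAt.congr_deriv (((hPu 0 x hx).sub (hPv 0 x hx)).const_mul (-β)) ?_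
    simp only [A2]; ring
  have hA2 : ∀ x ∈ S, HasDerivAt A2 (A3 x) x := fun x hx => by
    refine HasDerivAt.congr_deriv (((hPu 1 x hx).add (hPv 1 x hx)).const_mul (-β ^ 2)) ?_
    simp only [A3]; ring
  have hA3 : ∀ x ∈ S, HasDerivAt A3 (A4 x) x := fun x hx => by
    refine HasDerivAt.congr_deriv (((hPu 2 x hx).sub (hPv 2 x hx)).const_mul (-β ^ 3)) ?_
    simp only [A4]; ring
  have hg1 : ∀ x ∈ S, HasDerivAt g (g x * A1 x) x := fun x hx => by
    have pu := (Real.Gamma_pos_of_pos hx.1).ne'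
    have pv := (Real.Gamma_pos_of_pos hx.2).ne'
    have d1 : HasDerivAt (fun x => Real.Gamma (α + β * x))
        (deriv Real.Gamma (α + β * x) * β) x :=
      (aux_gamma_analytic hx.1).differentiableAt.hasDerivAt.comp (h₂ := Real.Gamma) x (hu x)
    have d2 : HasDerivAt (fun x => Real.Gamma (α - β * x))
        (deriv Real.Gamma (α - β * x) * (-β)) x :=
      (aux_gamma_analytic hx.2).differentiableAt.hasDerivAt.comp (h₂ := Real.Gamma) x (hv x)
    refine HasDerivAt.congr_deriv ((d1.mul d2).inv (mul_ne_zero pu pv)) ?_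
    simp only [A1, hg, polygamma, iteratedDeriv_zero, digamma, Pi.mul_apply]
    field_simp
    ring
  have s1 := aux_step hS (n := 0) (f := g) (F := g) (by simp) hg1
  have s2 := aux_step hS (F' := fun x => g x * (A1 x ^ 2 + A2 x)) s1 (fun x hx => by
    refine HasDerivAt.congr_deriv ((hg1 x hx).mul (hA1 x hx)) ?_
    ring)
  have s3 := aux_step hS (F' := fun x => g x * (A1 x ^ 3 + 3 * A1 x * A2 x + A3 x)) s2
    (fun x hx => by
    refine HasDerivAt.congr_deriv ((hg1 x hx).mul (((hA1 x hx).pow 2).add (hA2 x hx))) ?_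
    push_cast
    ring)
  have s4 := aux_step hS (F' := fun x => g x * (A1 x ^ 4 + 6 * A1 x ^ 2 * A2 x + 3 * A2 x ^ 2
      + 4 * A1 x * A3 x + A4 x)) s3
    (fun x hx => by
    refine HasDerivAt.congr_deriv ((hg1 x hx).mul ((((hA1 x hx).pow 3).add
      (((hA1 x hx).const_mul 3).mul (hA2 x hx))).add (hA3 x hx))) ?_
    push_cast
    ring)
  have h0 : (0 : ℝ) ∈ S := by simp [S, hα]
  have := s4 0 h0
  rw [show (4 : ℕ) = 0 + 1 + 1 + 1 + 1 from rfl, this]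
  have pg := (Real.Gamma_pos_of_pos hα).ne'
  simp only [hg, A1, A2, A3, A4, mul_zero, add_zero, sub_zero, sub_self]
  field_simp
  ring
end
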